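/- arXiv:1503.06243 — 2 statements merged into one kernel-verified Lean document; each statement's English description precedes it below -/
import Mathlib

section
/- For n ≥ 5 and 1 ≤ d ≤ n-3, the d-th total Betti number of R/J_n, where J_n is the Stanley-Reisner ideal of the n-cycle over a field K, equals C(n, d+1) · d(n-d-2)/(n-1). -/
/-- Cyclic adjacency of vertices `i, j` of the `n`-gon (labeled `0, …, n-1` in cyclic order). -/
def cycAdj (n : ℕ) (i j : Fin n) : Prop :=
  (i.val + 1) % n = j.val ∨ (j.val + 1) % n = i.val

/-- `p` is a diagonal of the convex `n`-gon: a pair of distinct non-adjacent vertices. -/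
def IsDiagonal (n : ℕ) (p : Finset (Fin n)) : Prop :=
  ∃ i j : Fin n, i ≠ j ∧ ¬ cycAdj n i j ∧ p = {i, j}

/-- Two chords of the convex `n`-gon cross (intersect in their interiors):
the endpoints interlace along the boundary. -/
def Cross (n : ℕ) (p q : Finset (Fin n)) : Prop :=
  ∃ a b c d : Fin n, a < c ∧ c < b ∧ b < d ∧
    ((p = {a, b} ∧ q = {c, d}) ∨ (p = {c, d} ∧ q = {a, b}))

/-- The Stanley–Reisner ideal `J n` of the `n`-cycle: the ideal of `K[x₀, …, x_{n-1}]`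
generated by the monomials `xᵢxⱼ` over all diagonals `{i, j}` of the `n`-cycle. -/
noncomputable def cycleIdeal (n : ℕ) (K : Type) [Field K] :
    Ideal (MvPolynomial (Fin n) K) :=
  Ideal.span {m | ∃ i j : Fin n, i ≠ j ∧ ¬ cycAdj n i j ∧
    m = MvPolynomial.X i * MvPolynomial.X j}

/-- A minimal free resolution of the `MvPolynomial (Fin n) K`-module `M`:
free modules `Fᵈ = Rᵇ⁽ᵈ⁾` with differentials `φ d : F^{d+1} → F^d`, an augmentation
`ε : F⁰ → M`, exactness, and minimality (all matrix entries of the differentials lie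
in the maximal/irrelevant ideal, i.e. have zero constant coefficient). The rank `b d`
is then the `d`-th total Betti number `β_d(M)`. -/
structure MinimalFreeResolution (n : ℕ) (K : Type) [Field K]
    (M : Type) [AddCommGroup M] [Module (MvPolynomial (Fin n) K) M] where
  b : ℕ → ℕ
  φ : ∀ d : ℕ, (Fin (b (d + 1)) →₀ MvPolynomial (Fin n) K) →ₗ[MvPolynomial (Fin n) K]
        (Fin (b d) →₀ MvPolynomial (Fin n) K)
  ε : (Fin (b 0) →₀ MvPolynomial (Fin n) K) →ₗ[MvPolynomial (Fin n) K] M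
  surj : Function.Surjective ε
  exact_zero : LinearMap.ker ε = LinearMap.range (φ 0)
  exact_succ : ∀ d, LinearMap.ker (φ d) = LinearMap.range (φ (d + 1))
  minimal : ∀ d (i : Fin (b (d + 1))) (j : Fin (b d)),
    MvPolynomial.constantCoeff (φ d (Finsupp.single i 1) j) = 0

open CategoryTheory CategoryTheory.Abelian

section ExtPullback

variable {R : Type} [CommRing R] (κ : Type) [AddCommGroup κ] [Module R κ]
variable {A B C M N : Type} [AddCommGroup A] [Module R A] [AddCommGroup B] [Module R B]
  [AddCommGroup C] [Module R C] [AddCommGroup M] [Module R M] [AddCommGroup N] [Module R N]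

/-- The `R`-module `Ext^i_R(M, κ)`. -/
abbrev ExtMod (R : Type) [CommRing R] (κ M : Type) [AddCommGroup κ] [Module R κ]
    [AddCommGroup M] [Module R M] (i : ℕ) : Type :=
  Ext (ModuleCat.of R M) (ModuleCat.of R κ) i

/-- The map `Ext^i(N, κ) → Ext^i(M, κ)` induced by `f : M → N`. -/
noncomputable def extPull (f : M →ₗ[R] N) (i : ℕ) : ExtMod R κ N i →ₗ[R] ExtMod R κ M i :=
  (Ext.mk₀ (ModuleCat.ofHom f)).precompOfLinear R (ModuleCat.of R κ) (zero_add i)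

lemma extPull_apply (f : M →ₗ[R] N) {i : ℕ} (e : ExtMod R κ N i) :
    extPull κ f i e = (Ext.mk₀ (ModuleCat.ofHom f)).comp e (zero_add i) := rfl

lemma extPull_comp_apply (g : B →ₗ[R] C) (f : A →ₗ[R] B) {i : ℕ} (e : ExtMod R κ C i) :
    extPull κ (g ∘ₗ f) i e = extPull κ f i (extPull κ g i e) := by
  simp [extPull_apply, ModuleCat.ofHom_comp]

lemma extPull_id {i : ℕ} (e : ExtMod R κ M i) : extPull κ LinearMap.id i e = e := by
  simp [extPull_apply]

/-- A short exact sequence `0 → A → B → C → 0` of `R`-modules. -/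
structure IsSES (f : A →ₗ[R] B) (g : B →ₗ[R] C) : Prop where
  inj : Function.Injective f
  exact : Function.Exact f g
  surj : Function.Surjective g

variable {κ}

namespace IsSES

variable {f : A →ₗ[R] B} {g : B →ₗ[R] C}

/-- The short complex of module categories underlying a short exact sequence. -/
abbrev complex (h : IsSES f g) : ShortComplex (ModuleCat.{0} R) :=
  ShortComplex.mk (ModuleCat.ofHom f) (ModuleCat.ofHom g)
    (by ext x; exact h.exact.apply_apply_eq_zero x)

lemma shortExact (h : IsSES f g) : h.complex.ShortExact :=
  ModuleCat.shortComplex_shortExact h.complex h.exact h.inj h.surj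

/-- The connecting homomorphism `Ext^i(A, κ) → Ext^{i+1}(C, κ)`. -/
noncomputable def connecting (κ : Type) [AddCommGroup κ] [Module R κ] (h : IsSES f g) (i : ℕ) :
    ExtMod R κ A i →ₗ[R] ExtMod R κ C (i + 1) :=
  h.shortExact.extClass.precompOfLinear R (ModuleCat.of R κ) (add_comm 1 i)

lemma exact_mid (h : IsSES f g) (i : ℕ) : Function.Exact (extPull κ g i) (extPull κ f i) := by
  intro e
  refine ⟨fun he => Ext.contravariant_sequence_exact₂ h.shortExact _ e he, ?_⟩
  rintro ⟨c, rfl⟩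
  rw [← extPull_comp_apply, h.exact.linearMap_comp_eq_zero]
  simp [extPull_apply, Ext.mk₀_zero]

lemma exact_left (h : IsSES f g) (i : ℕ) : Function.Exact (extPull κ f i) (h.connecting κ i) := by
  intro e
  refine ⟨fun he => Ext.contravariant_sequence_exact₁ h.shortExact _ e (add_comm 1 i) he, ?_⟩
  rintro ⟨c, rfl⟩
  exact h.shortExact.extClass_comp_assoc c (h := add_comm 1 i)

lemma exact_right (h : IsSES f g) (i : ℕ) :
    Function.Exact (h.connecting κ i) (extPull κ g (i + 1)) := by
  intro e
  refine ⟨fun he => Ext.contravariant_sequence_exact₃ h.shortExact _ e he (add_comm 1 i), ?_⟩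
  rintro ⟨c, rfl⟩
  exact h.shortExact.comp_extClass_assoc c (add_comm 1 i)

lemma extPull_zero_injective (h : IsSES f g) : Function.Injective (extPull κ g 0) := by
  have : Epi (ModuleCat.ofHom g) := (ModuleCat.epi_iff_surjective _).2 h.surj
  exact Ext.precomp_mk₀_injective_of_epi (ModuleCat.of R κ) (ModuleCat.ofHom g)

lemma connecting_naturality {A' B' C' : Type} [AddCommGroup A'] [Module R A'] [AddCommGroup B']
    [Module R B'] [AddCommGroup C'] [Module R C'] {f' : A' →ₗ[R] B'} {g' : B' →ₗ[R] C'}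
    (h : IsSES f g) (h' : IsSES f' g') (a : A →ₗ[R] A') (b : B →ₗ[R] B') (c : C →ₗ[R] C')
    (hab : f' ∘ₗ a = b ∘ₗ f) (hbc : g' ∘ₗ b = c ∘ₗ g) {i : ℕ} (e : ExtMod R κ A' i) :
    h.connecting κ i (extPull κ a i e) = extPull κ c (i + 1) (h'.connecting κ i e) := by
  let φ : h.complex ⟶ h'.complex :=
    { τ₁ := ModuleCat.ofHom a
      τ₂ := ModuleCat.ofHom b
      τ₃ := ModuleCat.ofHom c
      comm₁₂ := by rw [← ModuleCat.ofHom_comp, hab, ModuleCat.ofHom_comp]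
      comm₂₃ := by rw [← ModuleCat.ofHom_comp, hbc, ModuleCat.ofHom_comp] }
  have nat := ShortComplex.ShortExact.extClass_naturality h.shortExact h'.shortExact φ
  change h.shortExact.extClass.comp ((Ext.mk₀ φ.τ₁).comp e (zero_add i)) (add_comm 1 i) =
    (Ext.mk₀ φ.τ₃).comp (h'.shortExact.extClass.comp e (add_comm 1 i)) (zero_add (i + 1))
  rw [← Ext.comp_assoc (a₁₂ := 1) _ _ _ (by lia) (by lia) (by lia), nat,
    Ext.comp_assoc (a₂₃ := i + 1) _ _ _ (by lia) (by lia) (by lia)]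

lemma length_mid (h : IsSES f g) (hf : ∀ i, Function.Surjective (extPull κ f i)) (i : ℕ) :
    Module.length R (ExtMod R κ B i) =
      Module.length R (ExtMod R κ C i) + Module.length R (ExtMod R κ A i) := by
  refine Module.length_eq_add_of_exact (extPull κ g i) (extPull κ f i) ?_ (hf i) (h.exact_mid i)
  cases i with
  | zero => exact h.extPull_zero_injective
  | succ i =>
    refine (injective_iff_map_eq_zero _).2 fun c hc => ?_
    obtain ⟨a, rfl⟩ := (h.exact_right i c).1 hc
    obtain ⟨b, rfl⟩ := hf i a
    exact (h.exact_left i).apply_apply_eq_zero b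

lemma length_right_zero (h : IsSES f g) (hf : extPull κ f 0 = 0) :
    Module.length R (ExtMod R κ C 0) = Module.length R (ExtMod R κ B 0) := by
  refine (LinearEquiv.ofBijective (extPull κ g 0) ⟨h.extPull_zero_injective, ?_⟩).length_eq
  exact fun e => (h.exact_mid 0 e).1 (by rw [hf]; rfl)

lemma length_right_succ (h : IsSES f g) (i : ℕ) (hf : extPull κ f i = 0)
    (hf' : extPull κ f (i + 1) = 0) :
    Module.length R (ExtMod R κ C (i + 1)) =
      Module.length R (ExtMod R κ A i) + Module.length R (ExtMod R κ B (i + 1)) := by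
  refine Module.length_eq_add_of_exact (h.connecting κ i) (extPull κ g (i + 1)) ?_ ?_
    (h.exact_right i)
  · refine (injective_iff_map_eq_zero _).2 fun a ha => ?_
    obtain ⟨b, rfl⟩ := (h.exact_left i a).1 ha
    rw [hf]; rfl
  · exact fun e => (h.exact_mid (i + 1) e).1 (by rw [hf']; rfl)

end IsSES

lemma subsingleton_extMod_succ [Module.Projective R M] (i : ℕ) :
    Subsingleton (ExtMod R κ M (i + 1)) := by
  have : Projective (ModuleCat.of R M) := ModuleCat.projective_of_categoryTheory_projective _
  exact Ext.subsingleton_of_projective _ _ i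

lemma extPull_zero_eq_zero (f : M →ₗ[R] N) (hf : ∀ u : N →ₗ[R] κ, u ∘ₗ f = 0) :
    extPull κ f 0 = 0 := by
  ext1 e
  obtain ⟨u, rfl⟩ := (Ext.mk₀_bijective _ _).2 e
  rw [extPull_apply, Ext.mk₀_comp_mk₀]
  have : ModuleCat.ofHom f ≫ u = 0 := by
    ext x
    exact LinearMap.congr_fun (hf u.hom) x
  rw [this, Ext.mk₀_zero]; rfl

lemma length_extMod_zero_finsupp {ι : Type} [Fintype ι] :
    Module.length R (ExtMod R κ (ι →₀ R) 0) = Fintype.card ι * Module.length R κ := by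
  rw [LinearEquiv.length_eq ((Ext.linearEquiv₀ (R := R)).trans
    ((ModuleCat.homLinearEquiv (S := R)).trans (Finsupp.llift κ R R ι).symm)), Module.length_pi]
  simp

end ExtPullback

section LinearModules

variable {R : Type} [CommRing R] (m : Ideal R)
variable {A B C M N : Type} [AddCommGroup A] [Module R A] [AddCommGroup B] [Module R B]
  [AddCommGroup C] [Module R C] [AddCommGroup M] [Module R M] [AddCommGroup N] [Module R N]

/-- The module `M` is linear with respect to `m` if every class in `Ext^i(M, R/m)` is induced from
`M/mM`. For a graded module generated in a single degree over a polynomial ring this says that its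
minimal free resolution is linear. -/
def IsExtLinear (M : Type) [AddCommGroup M] [Module R M] : Prop :=
  ∀ i, Function.Surjective (extPull (R ⧸ m) (m • ⊤ : Submodule R M).mkQ i)

variable {m}

lemma smul_top_le_comap (f : A →ₗ[R] B) :
    (m • ⊤ : Submodule R A) ≤ (m • ⊤ : Submodule R B).comap f := by
  rw [← Submodule.map_le_iff_le_comap, Submodule.map_smul'']
  exact Submodule.smul_mono le_rfl le_top

lemma extPull_eq_zero_of_isExtLinear (hB : IsExtLinear m B) (f : A →ₗ[R] B)
    (hf : ∀ a, f a ∈ (m • ⊤ : Submodule R B)) (i : ℕ) : extPull (R ⧸ m) f i = 0 := by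
  ext1 e
  obtain ⟨e, rfl⟩ := hB i e
  have : (m • ⊤ : Submodule R B).mkQ ∘ₗ f = 0 := by
    ext a
    simpa using hf a
  rw [← extPull_comp_apply, this]
  simp [extPull_apply, Ext.mk₀_zero]

lemma isSES_subtype_mkQ (P : Submodule R M) : IsSES P.subtype P.mkQ :=
  ⟨P.subtype_injective, LinearMap.exact_subtype_mkQ P, P.mkQ_surjective⟩

lemma isExtLinear_of_projective [Module.Projective R M] : IsExtLinear m M := by
  intro i e
  refine ((isSES_subtype_mkQ _).exact_mid i e).1 ?_
  cases i with
  | zero =>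
    rw [extPull_zero_eq_zero, LinearMap.zero_apply]
    intro u
    ext ⟨a, ha⟩
    have := smul_top_le_comap u ha
    have h0 : (m • ⊤ : Submodule R (R ⧸ m)) = ⊥ := by
      rw [eq_bot_iff, Submodule.smul_le]
      intro r hr y _
      obtain ⟨y, rfl⟩ := Ideal.Quotient.mk_surjective y
      rw [Submodule.mem_bot, ← Ideal.Quotient.mk_eq_mk, ← Submodule.Quotient.mk_smul,
        Submodule.Quotient.mk_eq_zero]
      exact Ideal.mul_mem_right _ _ hr
    rw [h0] at this
    simpa using this
  | succ i =>
    have := subsingleton_extMod_succ (R := R) (κ := R ⧸ m) (M := M) i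
    rw [Subsingleton.elim e 0, map_zero]

lemma exists_retraction_quotient [m.IsMaximal] (f : A →ₗ[R] B)
    (hf : (m • ⊤ : Submodule R B).comap f ≤ m • ⊤) :
    ∃ ρ : (B ⧸ (m • ⊤ : Submodule R B)) →ₗ[R] (A ⧸ (m • ⊤ : Submodule R A)),
      (ρ ∘ₗ (m • ⊤ : Submodule R B).mkQ) ∘ₗ f = (m • ⊤ : Submodule R A).mkQ := by
  let _ := Ideal.Quotient.field m
  have tors : Module.IsTorsionBySet R (B ⧸ (m • ⊤ : Submodule R B)) m :=
    Module.isTorsionBySet_quotient_ideal_smul B m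
  let _ := tors.module
  have : IsSemisimpleModule R (B ⧸ (m • ⊤ : Submodule R B)) :=
    tors.isSemisimpleModule_iff.1 inferInstance
  obtain ⟨ρ, hρ⟩ := IsSemisimpleModule.extension_property
    (Submodule.mapQ _ _ f (smul_top_le_comap f)) (by
      rw [← LinearMap.ker_eq_bot, Submodule.ker_mapQ, ← le_bot_iff, Submodule.map_le_iff_le_comap]
      simpa using hf) LinearMap.id
  refine ⟨ρ, LinearMap.ext fun a => ?_⟩
  exact LinearMap.congr_fun hρ (Submodule.Quotient.mk a)

lemma extPull_surjective_of_isExtLinear [m.IsMaximal] (hA : IsExtLinear m A) (f : A →ₗ[R] B)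
    (hf : (m • ⊤ : Submodule R B).comap f ≤ m • ⊤) (i : ℕ) :
    Function.Surjective (extPull (R ⧸ m) f i) := by
  intro e
  obtain ⟨e, rfl⟩ := hA i e
  obtain ⟨ρ, hρ⟩ := exists_retraction_quotient f hf
  exact ⟨extPull _ (ρ ∘ₗ (m • ⊤ : Submodule R B).mkQ) i e, by rw [← extPull_comp_apply, hρ]⟩

lemma IsSES.isExtLinear_mid [m.IsMaximal] {f : A →ₗ[R] B} {g : B →ₗ[R] C} (h : IsSES f g)
    (hA : IsExtLinear m A) (hC : IsExtLinear m C)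
    (hf : (m • ⊤ : Submodule R B).comap f ≤ m • ⊤) : IsExtLinear m B := by
  intro i e
  obtain ⟨a, ha⟩ := hA i (extPull _ f i e)
  obtain ⟨ρ, hρ⟩ := exists_retraction_quotient f hf
  have key : extPull (R ⧸ m) f i
      (e - extPull (R ⧸ m) (m • ⊤ : Submodule R B).mkQ i (extPull _ ρ i a)) = 0 := by
    rw [map_sub, ← extPull_comp_apply, ← extPull_comp_apply, ← ha, sub_eq_zero, ← hρ]
    rfl
  obtain ⟨c, hc⟩ := (h.exact_mid i _).1 key
  obtain ⟨c, rfl⟩ := hC i c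
  refine ⟨extPull _ ρ i a + extPull _ (Submodule.mapQ _ _ g (smul_top_le_comap g)) i c, ?_⟩
  rw [map_add, ← extPull_comp_apply _ (Submodule.mapQ _ _ g (smul_top_le_comap g))]
  rw [← extPull_comp_apply] at hc
  rw [Submodule.mapQ_mkQ, hc, add_sub_cancel]

lemma IsSES.isExtLinear_right [m.IsMaximal] {f : A →ₗ[R] B} {g : B →ₗ[R] C} (h : IsSES f g)
    (hA : IsExtLinear m A) (hB : IsExtLinear m B) (hf : ∀ a, f a ∈ (m • ⊤ : Submodule R B))
    (hf' : (m • ⊤ : Submodule R (m • ⊤ : Submodule R B)).comap (f.codRestrict _ hf) ≤ m • ⊤) :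
    IsExtLinear m C := by
  have hker : LinearMap.ker g ≤ m • ⊤ := by
    intro b hb
    obtain ⟨a, rfl⟩ := (h.exact b).1 hb
    exact hf a
  -- `C/mC` is `B/mB`, so `B → B/mB` factors through `C`.
  let q : C →ₗ[R] (B ⧸ (m • ⊤ : Submodule R B)) :=
    ((LinearMap.ker g).liftQ (m • ⊤ : Submodule R B).mkQ (by simpa using hker)) ∘ₗ
      (g.quotKerEquivOfSurjective h.surj).symm.toLinearMap
  have hq : q ∘ₗ g = (m • ⊤ : Submodule R B).mkQ := by
    ext b
    have : (g.quotKerEquivOfSurjective h.surj).symm (g b) = Submodule.Quotient.mk b := by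
      rw [LinearEquiv.symm_apply_eq]; rfl
    simp [q, this]
  suffices H : ∀ i, Function.Surjective (extPull (R ⧸ m) q i) by
    intro i c
    obtain ⟨y, rfl⟩ := H i c
    have hqm : (m • ⊤ : Submodule R C) ≤ LinearMap.ker q := by
      rw [Submodule.smul_le]
      intro r hr c _
      rw [LinearMap.mem_ker, map_smul]
      obtain ⟨b, hb⟩ := Submodule.mkQ_surjective _ (q c)
      rw [← hb, ← map_smul]
      rw [Submodule.mkQ_apply, Submodule.Quotient.mk_eq_zero]
      exact Submodule.smul_mem_smul hr Submodule.mem_top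
    refine ⟨extPull _ ((m • ⊤ : Submodule R C).liftQ q hqm) i y, ?_⟩
    rw [← extPull_comp_apply, Submodule.liftQ_mkQ]
  intro i c
  obtain ⟨y, hy⟩ := hB i (extPull _ g i c)
  have key : extPull (R ⧸ m) g i (c - extPull _ q i y) = 0 := by
    rw [map_sub, ← extPull_comp_apply, hq, hy, sub_self]
  cases i with
  | zero => exact ⟨y, (sub_eq_zero.1 (h.extPull_zero_injective (key.trans (map_zero _).symm))).symm⟩
  | succ i =>
    obtain ⟨a, ha⟩ := (h.exact_right i _).1 key
    obtain ⟨b, rfl⟩ := extPull_surjective_of_isExtLinear hA _ hf' i a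
    rw [h.connecting_naturality (isSES_subtype_mkQ (m • ⊤ : Submodule R B)) (f.codRestrict _ hf)
      LinearMap.id q (by ext; rfl) (by rw [hq]; rfl)] at ha
    exact ⟨y + (isSES_subtype_mkQ _).connecting _ i b, by rw [map_add, ha, add_sub_cancel]⟩

end LinearModules

section IdealSteps

variable {R : Type} [CommRing R] (m : Ideal R)

/-- The ideal `I` arises from `I'` by adjoining `x N`, where `N ∩ (I' : x) = L` is contained
in `m N` and `I'` is generated by part of a minimal generating system of `I`. -/
structure IsVertexStep (x : R) (I' N L I : Ideal R) : Prop where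
  le : I' ≤ I
  mul_mem : ∀ r ∈ N, x * r ∈ I
  cover : ∀ f ∈ I, ∃ r ∈ N, f - x * r ∈ I'
  colon : ∀ r ∈ N, x * r ∈ I' ↔ r ∈ L
  le_mul : L ≤ m * N
  inf_le : I' ⊓ m * I ≤ m * I'

variable {m} {x : R} {I' N L I : Ideal R}

namespace IsVertexStep

lemma le_right (h : IsVertexStep m x I' N L I) : L ≤ N := h.le_mul.trans Ideal.mul_le_right

/-- The map `N → I / I'` sending `r` to the class of `x r`. -/
def toQuotient (h : IsVertexStep m x I' N L I) : N →ₗ[R] (I ⧸ I'.submoduleOf I) :=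
  (I'.submoduleOf I).mkQ ∘ₗ
    ((LinearMap.mulLeft R x ∘ₗ N.subtype).codRestrict I fun r => h.mul_mem r r.2)

lemma isSES_left (h : IsVertexStep m x I' N L I) :
    IsSES (Submodule.inclusion h.le) (I'.submoduleOf I).mkQ := by
  refine ⟨Submodule.inclusion_injective _, LinearMap.exact_iff.2 ?_, Submodule.mkQ_surjective _⟩
  rw [Submodule.ker_mkQ, Submodule.range_inclusion]
  rfl

lemma isSES_right (h : IsVertexStep m x I' N L I) :
    IsSES (Submodule.inclusion h.le_right) h.toQuotient := by
  refine ⟨Submodule.inclusion_injective _, LinearMap.exact_iff.2 ?_, ?_⟩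
  · ext r
    rw [Submodule.range_inclusion, Submodule.mem_comap, Submodule.subtype_apply,
      ← h.colon r r.2, LinearMap.mem_ker, toQuotient, LinearMap.comp_apply, Submodule.mkQ_apply,
      Submodule.Quotient.mk_eq_zero]
    rfl
  · intro c
    obtain ⟨⟨f, hf⟩, rfl⟩ := Submodule.mkQ_surjective _ c
    obtain ⟨r, hr, hfr⟩ := h.cover f hf
    refine ⟨⟨r, hr⟩, ((Submodule.Quotient.eq _).2 ?_).symm⟩
    exact hfr

lemma comap_inclusion_le {J J' : Ideal R} (hJ : J ≤ J') (h : J ⊓ m * J' ≤ m * J) :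
    (m • ⊤ : Submodule R J').comap (Submodule.inclusion hJ) ≤ m • ⊤ := by
  intro r hr
  rw [Submodule.mem_comap, Submodule.mem_smul_top_iff] at hr
  rw [Submodule.mem_smul_top_iff]
  exact h ⟨r.2, hr⟩

lemma extPull_inclusion_eq_zero (h : IsVertexStep m x I' N L I) (hN : IsExtLinear m N) (i : ℕ) :
    extPull (R ⧸ m) (Submodule.inclusion h.le_right) i = 0 :=
  extPull_eq_zero_of_isExtLinear hN _
    (fun a => (Submodule.mem_smul_top_iff _ _ _).2 (h.le_mul a.2)) i

variable [m.IsMaximal]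

lemma length_eq_add_quotient (h : IsVertexStep m x I' N L I) (hI' : IsExtLinear m I') (i : ℕ) :
    Module.length R (ExtMod R (R ⧸ m) I i) =
      Module.length R (ExtMod R (R ⧸ m) (I ⧸ I'.submoduleOf I) i) +
        Module.length R (ExtMod R (R ⧸ m) I' i) :=
  h.isSES_left.length_mid
    (extPull_surjective_of_isExtLinear hI' _ (comap_inclusion_le h.le h.inf_le)) i

lemma length_zero (h : IsVertexStep m x I' N L I) (hI' : IsExtLinear m I')
    (hN : IsExtLinear m N) :
    Module.length R (ExtMod R (R ⧸ m) I 0) =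
      Module.length R (ExtMod R (R ⧸ m) N 0) + Module.length R (ExtMod R (R ⧸ m) I' 0) := by
  rw [h.length_eq_add_quotient hI',
    h.isSES_right.length_right_zero (h.extPull_inclusion_eq_zero hN 0)]

lemma length_succ (h : IsVertexStep m x I' N L I) (hI' : IsExtLinear m I')
    (hN : IsExtLinear m N) (i : ℕ) :
    Module.length R (ExtMod R (R ⧸ m) I (i + 1)) =
      Module.length R (ExtMod R (R ⧸ m) L i) + Module.length R (ExtMod R (R ⧸ m) N (i + 1)) +
        Module.length R (ExtMod R (R ⧸ m) I' (i + 1)) := by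
  rw [h.length_eq_add_quotient hI', h.isSES_right.length_right_succ i
    (h.extPull_inclusion_eq_zero hN i) (h.extPull_inclusion_eq_zero hN (i + 1))]

lemma isExtLinear (h : IsVertexStep m x I' N I' I) (hI' : IsExtLinear m I')
    (hN : IsExtLinear m N) (hinf : I' ⊓ m * (m * N) ≤ m * I') : IsExtLinear m I := by
  refine h.isSES_left.isExtLinear_mid hI' ?_ (comap_inclusion_le h.le h.inf_le)
  refine h.isSES_right.isExtLinear_right hI' hN
    (fun a => (Submodule.mem_smul_top_iff _ _ _).2 (h.le_mul a.2)) ?_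
  intro r hr
  rw [Submodule.mem_smul_top_iff]
  refine hinf ⟨r.2, ?_⟩
  rw [Submodule.mem_comap] at hr
  have := Submodule.mem_map_of_mem (f := N.subtype ∘ₗ (m • ⊤ : Submodule R N).subtype) hr
  rw [Submodule.map_comp, Submodule.map_smul'', Submodule.map_top, Submodule.range_subtype,
    Submodule.map_smul'', Submodule.map_smul'', Submodule.map_top, Submodule.range_subtype] at this
  exact this

end IsVertexStep

lemma isExtLinear_bot : IsExtLinear m (⊥ : Ideal R) :=
  isExtLinear_of_projective

lemma length_extMod_bot (i : ℕ) : Module.length R (ExtMod R (R ⧸ m) (⊥ : Ideal R) i) = 0 := by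
  rw [Module.length_eq_zero_iff]
  refine ⟨fun a b => ?_⟩
  rw [← extPull_id (R ⧸ m) a, ← extPull_id (R ⧸ m) b,
    show (LinearMap.id : (⊥ : Ideal R) →ₗ[R] (⊥ : Ideal R)) = 0 from Subsingleton.elim _ _]
  simp [extPull_apply, Ext.mk₀_zero]

end IdealSteps

section MinimalCovers

variable {R : Type} [CommRing R] {m : Ideal R}
variable {A B C : Type} [AddCommGroup A] [Module R A] [AddCommGroup B] [Module R B]
  [AddCommGroup C] [Module R C] {f : A →ₗ[R] B} {g : B →ₗ[R] C}

lemma IsSES.length_zero_of_minimal [Module.Projective R B] (h : IsSES f g)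
    (hf : ∀ a, f a ∈ (m • ⊤ : Submodule R B)) :
    Module.length R (ExtMod R (R ⧸ m) C 0) = Module.length R (ExtMod R (R ⧸ m) B 0) :=
  h.length_right_zero (extPull_eq_zero_of_isExtLinear isExtLinear_of_projective f hf 0)

lemma IsSES.length_succ_of_minimal [Module.Projective R B] (h : IsSES f g)
    (hf : ∀ a, f a ∈ (m • ⊤ : Submodule R B)) (i : ℕ) :
    Module.length R (ExtMod R (R ⧸ m) C (i + 1)) = Module.length R (ExtMod R (R ⧸ m) A i) := by
  have := subsingleton_extMod_succ (R := R) (κ := R ⧸ m) (M := B) i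
  rw [h.length_right_succ i (extPull_eq_zero_of_isExtLinear isExtLinear_of_projective f hf i)
    (extPull_eq_zero_of_isExtLinear isExtLinear_of_projective f hf (i + 1)),
    (Module.length_eq_zero_iff (M := ExtMod R (R ⧸ m) B (i + 1))).2 this, add_zero]

lemma Finsupp.mem_smul_top_of_forall_mem {ι : Type} (v : ι →₀ R) (hv : ∀ j, v j ∈ m) :
    v ∈ (m • ⊤ : Submodule R (ι →₀ R)) := by
  rw [← v.sum_single]
  refine Submodule.sum_mem _ fun j _ => ?_
  rw [← mul_one (v j), ← smul_eq_mul, ← Finsupp.smul_single]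
  exact Submodule.smul_mem_smul (hv j) trivial

lemma length_quotient_of_isMaximal [hm : m.IsMaximal] : Module.length R (R ⧸ m) = 1 := by
  have := isSimpleModule_iff_isCoatom.2 hm.out
  exact Module.length_eq_one R (R ⧸ m)

lemma length_extMod_ideal_top_zero [m.IsMaximal] :
    Module.length R (ExtMod R (R ⧸ m) (⊤ : Ideal R) 0) = 1 := by
  rw [LinearEquiv.length_eq ((Ext.linearEquiv₀ (R := R)).trans
    ((ModuleCat.homLinearEquiv (S := R)).trans ((LinearEquiv.congrLeft (R ⧸ m) R
      Submodule.topEquiv).trans (LinearMap.ringLmapEquivSelf R R (R ⧸ m))))),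
    length_quotient_of_isMaximal]

instance : Module.Projective R (⊤ : Ideal R) :=
  Module.Projective.of_equiv (Submodule.topEquiv (R := R) (M := R)).symm

lemma isExtLinear_top : IsExtLinear m (⊤ : Ideal R) :=
  isExtLinear_of_projective

lemma length_extMod_ideal_top_succ (i : ℕ) :
    Module.length R (ExtMod R (R ⧸ m) (⊤ : Ideal R) (i + 1)) = 0 :=
  Module.length_eq_zero_iff.2 (subsingleton_extMod_succ i)

lemma isSES_subtype_of_ker_eq {P : Submodule R B} (hP : LinearMap.ker g = P)
    (hg : Function.Surjective g) : IsSES P.subtype g :=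
  ⟨P.subtype_injective, LinearMap.exact_iff.2 (by rw [hP, Submodule.range_subtype]), hg⟩

lemma isSES_subtype_rangeRestrict {P : Submodule R B} (hP : LinearMap.ker g = P) :
    IsSES (C := LinearMap.range g) P.subtype g.rangeRestrict :=
  isSES_subtype_of_ker_eq (C := LinearMap.range g) (by rw [LinearMap.ker_rangeRestrict, hP])
    g.surjective_rangeRestrict

end MinimalCovers

section IrrelevantIdeal

variable {σ K : Type} [Field K]

lemma mem_idealOfVars_iff_constantCoeff_eq_zero {p : MvPolynomial σ K} :
    p ∈ MvPolynomial.idealOfVars σ K ↔ MvPolynomial.constantCoeff p = 0 := by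
  rw [← pow_one (MvPolynomial.idealOfVars σ K), MvPolynomial.mem_pow_idealOfVars_iff']
  simp [MvPolynomial.constantCoeff_eq, Finsupp.degree_eq_zero_iff]

instance isMaximal_idealOfVars : (MvPolynomial.idealOfVars σ K).IsMaximal := by
  have : MvPolynomial.idealOfVars σ K =
      RingHom.ker (MvPolynomial.constantCoeff : MvPolynomial σ K →+* K) := by
    ext p
    rw [mem_idealOfVars_iff_constantCoeff_eq_zero, RingHom.mem_ker]
  rw [this]
  exact RingHom.ker_isMaximal_of_surjective _ fun a => ⟨MvPolynomial.C a, by simp⟩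

end IrrelevantIdeal

section Resolution

variable {R : Type} [CommRing R] {m : Ideal R} {b : ℕ → ℕ}
  {φ : ∀ d : ℕ, (Fin (b (d + 1)) →₀ R) →ₗ[R] (Fin (b d) →₀ R)}

lemma range_subtype_mem_smul_top (hφ : ∀ d i j, φ d (Finsupp.single i 1) j ∈ m) (d : ℕ)
    (z : LinearMap.range (φ d)) :
    (LinearMap.range (φ d)).subtype z ∈ (m • ⊤ : Submodule R (Fin (b d) →₀ R)) := by
  obtain ⟨v, hv⟩ := LinearMap.mem_range.1 z.2
  rw [Submodule.subtype_apply, ← hv, ← v.sum_single, Finsupp.sum, map_sum]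
  refine Submodule.sum_mem _ fun i _ => ?_
  rw [← mul_one (v i), ← smul_eq_mul, ← Finsupp.smul_single, map_smul]
  exact Submodule.smul_mem _ _ (Finsupp.mem_smul_top_of_forall_mem _ (hφ d i))

variable [m.IsMaximal]

lemma length_extMod_range (hexact : ∀ d, LinearMap.ker (φ d) = LinearMap.range (φ (d + 1)))
    (hφ : ∀ d i j, φ d (Finsupp.single i 1) j ∈ m) (i d : ℕ) :
    Module.length R (ExtMod R (R ⧸ m) (LinearMap.range (φ d)) i) = b (d + i + 1) := by
  induction i generalizing d with
  | zero =>
    rw [(isSES_subtype_rangeRestrict (hexact d)).length_zero_of_minimal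
      (range_subtype_mem_smul_top hφ (d + 1)),
      length_extMod_zero_finsupp, length_quotient_of_isMaximal]
    simp
  | succ i ih =>
    rw [(isSES_subtype_rangeRestrict (hexact d)).length_succ_of_minimal
      (range_subtype_mem_smul_top hφ (d + 1)), ih]
    congr 2
    omega

/-- The ranks in a minimal free resolution of `R / I` are the lengths of the modules
`Ext^i(I, R / m)`. -/
lemma length_extMod_ideal_eq_rank {I : Ideal R} (hI : I ≤ m) (ε : (Fin (b 0) →₀ R) →ₗ[R] R ⧸ I)
    (hε : Function.Surjective ε) (hzero : LinearMap.ker ε = LinearMap.range (φ 0))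
    (hexact : ∀ d, LinearMap.ker (φ d) = LinearMap.range (φ (d + 1)))
    (hφ : ∀ d i j, φ d (Finsupp.single i 1) j ∈ m) (i : ℕ) :
    Module.length R (ExtMod R (R ⧸ m) I i) = b (i + 1) := by
  have hlen := length_extMod_range hexact hφ i 0
  rw [zero_add i, ← (isSES_subtype_of_ker_eq hzero hε).length_succ_of_minimal
    (range_subtype_mem_smul_top hφ 0)] at hlen
  rw [← hlen]
  refine ((isSES_subtype_mkQ I).length_succ_of_minimal (fun a => ?_) i).symm
  rw [smul_eq_mul, Ideal.mul_top]
  exact hI a.2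

end Resolution

lemma MinimalFreeResolution.length_extMod_ideal {n : ℕ} {K : Type} [Field K]
    {I : Ideal (MvPolynomial (Fin n) K)}
    (F : MinimalFreeResolution n K (MvPolynomial (Fin n) K ⧸ I))
    (hI : I ≤ MvPolynomial.idealOfVars (Fin n) K) (i : ℕ) :
    Module.length (MvPolynomial (Fin n) K) (ExtMod (MvPolynomial (Fin n) K)
      (MvPolynomial (Fin n) K ⧸ MvPolynomial.idealOfVars (Fin n) K) I i) = F.b (i + 1) :=
  length_extMod_ideal_eq_rank (φ := F.φ) hI F.ε F.surj F.exact_zero F.exact_succ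
    (fun d i j => mem_idealOfVars_iff_constantCoeff_eq_zero.2 (F.minimal d i j)) i

section MonomialIdeals

open MvPolynomial

variable {σ : Type} (K : Type) [Field K]

/-- The monomial ideal spanned by the monomials whose exponents lie in `U`. -/
noncomputable def monomialIdeal (U : UpperSet (σ →₀ ℕ)) : Ideal (MvPolynomial σ K) :=
  restrictSupportIdeal K (U : Set (σ →₀ ℕ)) U.upper

variable {K} {U U' V W : UpperSet (σ →₀ ℕ)} {k : ℕ} {s : σ →₀ ℕ}

lemma mem_monomialIdeal {p : MvPolynomial σ K} :
    p ∈ monomialIdeal K U ↔ ∀ e ∈ p.support, e ∈ U :=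
  Iff.rfl

lemma monomial_mem_monomialIdeal {e : σ →₀ ℕ} (he : e ∈ U) (c : K) :
    monomial e c ∈ monomialIdeal K U := by
  intro e' he'
  rw [Finset.mem_singleton.1 (support_monomial_subset he')]
  exact he

lemma monomialIdeal_le {I : Ideal (MvPolynomial σ K)} (h : ∀ e ∈ U, ∀ c : K, monomial e c ∈ I) :
    monomialIdeal K U ≤ I := by
  intro p hp
  rw [p.as_sum]
  exact I.sum_mem fun e he => h e (hp he) _

lemma monomialIdeal_mono (h : ∀ e ∈ U, e ∈ V) : monomialIdeal K U ≤ monomialIdeal K V :=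
  fun _ hp _ he => h _ (hp he)

lemma monomialIdeal_eq_bot (h : ∀ e, e ∉ U) : monomialIdeal K U = ⊥ :=
  le_bot_iff.1 (monomialIdeal_le fun e he => (h e he).elim)

lemma monomialIdeal_eq_top (h : ∀ e, e ∈ U) : monomialIdeal K U = ⊤ :=
  eq_top_iff.2 fun _ _ e _ => h e

lemma monomialIdeal_le_pow (h : ∀ e ∈ U, k ≤ e.degree) :
    monomialIdeal K U ≤ idealOfVars σ K ^ k :=
  fun p hp => (mem_pow_idealOfVars_iff k p).2 fun e he => h e (hp he)

lemma monomial_mem_mul {e e' : σ →₀ ℕ} {j : σ} (he : e = e' + Finsupp.single j 1) (he' : e' ∈ U)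
    (c : K) : monomial e c ∈ idealOfVars σ K * monomialIdeal K U := by
  rw [he, add_comm, ← one_mul c, ← monomial_mul]
  exact Ideal.mul_mem_mul (Ideal.subset_span ⟨j, rfl⟩) (monomial_mem_monomialIdeal he' c)

lemma monomialIdeal_inf_pow_le
    (h : ∀ e ∈ U, k < e.degree → ∃ j, ∃ e' ∈ U, e = e' + Finsupp.single j 1) :
    monomialIdeal K U ⊓ idealOfVars σ K ^ (k + 1) ≤ idealOfVars σ K * monomialIdeal K U := by
  rintro p ⟨hp, hpk⟩
  rw [p.as_sum]
  refine Ideal.sum_mem _ fun e he => ?_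
  obtain ⟨j, e', he', rfl⟩ := h e (hp he) ((mem_pow_idealOfVars_iff _ p).1 hpk e he)
  exact monomial_mem_mul rfl he' _

lemma isVertexStep_monomialIdeal (hle : ∀ e ∈ U', e ∈ U) (hmul : ∀ e ∈ V, s + e ∈ U)
    (hcover : ∀ e ∈ U, e ∈ U' ∨ ∃ e' ∈ V, e = s + e')
    (hcolon : ∀ e ∈ V, s + e ∈ U' ↔ e ∈ W)
    (hW : ∀ e ∈ W, ∃ j, ∃ e' ∈ V, e = e' + Finsupp.single j 1)
    (hU : ∀ e ∈ U, k ≤ e.degree)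
    (hU' : ∀ e ∈ U', k < e.degree → ∃ j, ∃ e' ∈ U', e = e' + Finsupp.single j 1) :
    IsVertexStep (idealOfVars σ K) (monomial s 1) (monomialIdeal K U') (monomialIdeal K V)
      (monomialIdeal K W) (monomialIdeal K U) where
  le := monomialIdeal_mono hle
  mul_mem r hr := by
    rw [r.as_sum, Finset.mul_sum]
    refine Ideal.sum_mem _ fun e he => ?_
    rw [monomial_mul]
    exact monomial_mem_monomialIdeal (hmul e (hr he)) _
  cover f hf := by
    have hsup : monomialIdeal K U ≤
        monomialIdeal K U' ⊔ Ideal.span {monomial s 1} * monomialIdeal K V := by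
      refine monomialIdeal_le fun e he c => ?_
      rcases hcover e he with h | ⟨e', he', rfl⟩
      · exact Ideal.mem_sup_left (monomial_mem_monomialIdeal h c)
      · refine Ideal.mem_sup_right ?_
        rw [← one_mul c, ← monomial_mul]
        exact Ideal.mul_mem_mul (Ideal.mem_span_singleton_self _)
          (monomial_mem_monomialIdeal he' c)
    obtain ⟨g, hg, h, hh, rfl⟩ := Submodule.mem_sup.1 (hsup hf)
    obtain ⟨r, hr, rfl⟩ := Ideal.mem_span_singleton_mul.1 hh
    exact ⟨r, hr, by rwa [add_sub_cancel_right]⟩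
  colon r hr := by
    constructor
    · refine fun h => mem_monomialIdeal.2 fun e he => ?_
      refine (hcolon e (hr he)).1 (mem_monomialIdeal.1 h _ (mem_support_iff.2 ?_))
      rw [coeff_monomial_mul, one_mul]
      exact mem_support_iff.1 he
    · intro h
      rw [r.as_sum, Finset.mul_sum]
      refine Ideal.sum_mem _ fun e he => ?_
      rw [monomial_mul]
      exact monomial_mem_monomialIdeal ((hcolon e (hr he)).2 (h he)) _
  le_mul := monomialIdeal_le fun e he c => by
    obtain ⟨j, e', he', h⟩ := hW e he
    exact monomial_mem_mul h he' c
  inf_le := by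
    refine le_trans (inf_le_inf_left _ ?_) (monomialIdeal_inf_pow_le hU')
    rw [pow_succ']
    exact Ideal.mul_mono_right (monomialIdeal_le_pow hU)

lemma monomialIdeal_inf_mul_mul_le (hV : ∀ e ∈ V, k ≤ e.degree)
    (hU' : ∀ e ∈ U', k + 1 < e.degree → ∃ j, ∃ e' ∈ U', e = e' + Finsupp.single j 1) :
    monomialIdeal K U' ⊓ idealOfVars σ K * (idealOfVars σ K * monomialIdeal K V) ≤
      idealOfVars σ K * monomialIdeal K U' := by
  refine le_trans (inf_le_inf_left _ ?_) (monomialIdeal_inf_pow_le hU')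
  rw [pow_succ', pow_succ']
  exact Ideal.mul_mono_right (Ideal.mul_mono_right (monomialIdeal_le_pow hV))

lemma card_le_degree {T : Finset σ} {e : σ →₀ ℕ} (hT : ∀ i ∈ T, e i ≠ 0) :
    T.card ≤ e.degree := by
  calc T.card = ∑ i ∈ T, 1 := by simp
    _ ≤ ∑ i ∈ T, e i := Finset.sum_le_sum fun i hi => Nat.one_le_iff_ne_zero.2 (hT i hi)
    _ ≤ ∑ i ∈ e.support, e i := Finset.sum_le_sum_of_subset fun i hi =>
        Finsupp.mem_support_iff.2 (hT i hi)

lemma exists_eq_add_single [DecidableEq σ] {T : Finset σ} {e : σ →₀ ℕ} (hT : ∀ i ∈ T, e i ≠ 0)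
    (hdeg : T.card < e.degree) :
    ∃ j e', e = e' + Finsupp.single j 1 ∧ ∀ i ∈ T, e' i ≠ 0 := by
  obtain ⟨j, hj, hjT⟩ : ∃ j, e j ≠ 0 ∧ (j ∈ T → 1 < e j) := by
    by_contra! h
    have hsub : e.support ⊆ T := fun i hi => (h i (Finsupp.mem_support_iff.1 hi)).1
    refine hdeg.not_ge ?_
    calc e.degree = ∑ i ∈ e.support, e i := rfl
      _ ≤ ∑ i ∈ e.support, 1 :=
        Finset.sum_le_sum fun i hi => (h i (Finsupp.mem_support_iff.1 hi)).2
      _ ≤ T.card := by simpa using Finset.card_le_card hsub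
  refine ⟨j, e - Finsupp.single j 1, ?_, fun i hi => ?_⟩
  · refine (tsub_add_cancel_of_le (Finsupp.single_le_iff.2 ?_)).symm
    omega
  · rw [Finsupp.tsub_apply, Finsupp.single_apply]
    have := hT i hi
    split_ifs with hij
    · subst hij
      have := hjT hi
      omega
    · simpa using this

end MonomialIdeals

section CycleIdeals

open MvPolynomial

variable (n : ℕ) (K : Type) [Field K]

/-- Exponents of monomials divisible by a variable with index in `[a, c)`. -/
def intervalSet (a c : ℕ) : UpperSet (Fin n →₀ ℕ) where
  carrier := {e | ∃ j : Fin n, a ≤ j.1 ∧ j.1 < c ∧ e j ≠ 0}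
  upper' := by
    rintro e e' hee' ⟨j, h₁, h₂, h₃⟩
    have := hee' j
    exact ⟨j, h₁, h₂, by omega⟩

/-- Exponents of monomials divisible by two non-consecutive variables with indices at least `a`. -/
def pathSet (a : ℕ) : UpperSet (Fin n →₀ ℕ) where
  carrier := {e | ∃ i j : Fin n, a ≤ i.1 ∧ i.1 + 2 ≤ j.1 ∧ e i ≠ 0 ∧ e j ≠ 0}
  upper' := by
    rintro e e' hee' ⟨i, j, h₁, h₂, h₃, h₄⟩
    have := hee' i
    have := hee' j
    exact ⟨i, j, h₁, h₂, by omega, by omega⟩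

/-- Exponents of monomials in the Stanley–Reisner ideal of the cycle on the indices `[a, n)`. -/
def cycleSet (a : ℕ) : UpperSet (Fin n →₀ ℕ) :=
  pathSet n a ⊔ intervalSet n (a + 1) (n - 1)

variable {n} {a c : ℕ} {e : Fin n →₀ ℕ}

lemma mem_cycleSet :
    e ∈ cycleSet n a ↔ e ∈ pathSet n a ∧ e ∈ intervalSet n (a + 1) (n - 1) :=
  UpperSet.mem_sup_iff

lemma one_le_degree_of_mem_intervalSet (he : e ∈ intervalSet n a c) : 1 ≤ e.degree := by
  obtain ⟨j, -, -, hj⟩ := he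
  simpa using card_le_degree (T := {j}) (by simpa using hj)

lemma two_le_degree_of_mem_pathSet (he : e ∈ pathSet n a) : 2 ≤ e.degree := by
  obtain ⟨i, j, -, hij, hi, hj⟩ := he
  have hne : i ≠ j := by rintro rfl; omega
  rw [← Finset.card_pair hne]
  exact card_le_degree (by simp [hi, hj])

lemma exists_intervalSet_add_single (he : e ∈ intervalSet n a c) (hdeg : 1 < e.degree) :
    ∃ j, ∃ e' ∈ intervalSet n a c, e = e' + Finsupp.single j 1 := by
  obtain ⟨i, h₁, h₂, hi⟩ := he
  obtain ⟨j, e', h, he'⟩ := exists_eq_add_single (T := {i}) (by simpa using hi) (by simpa using hdeg)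
  exact ⟨j, e', ⟨i, h₁, h₂, he' i (by simp)⟩, h⟩

lemma exists_pathSet_add_single (he : e ∈ pathSet n a) (hdeg : 2 < e.degree) :
    ∃ j, ∃ e' ∈ pathSet n a, e = e' + Finsupp.single j 1 := by
  obtain ⟨i, j, h₁, hij, hi, hj⟩ := he
  have hne : i ≠ j := by rintro rfl; omega
  obtain ⟨l, e', h, he'⟩ := exists_eq_add_single (T := {i, j}) (e := e) (by simp [hi, hj])
    (by rwa [Finset.card_pair hne])
  exact ⟨l, e', ⟨i, j, h₁, hij, he' i (by simp), he' j (by simp)⟩, h⟩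

lemma mem_intervalSet_of_mem_pathSet_succ (he : e ∈ pathSet n (a + 1)) :
    e ∈ intervalSet n (a + 2) n := by
  obtain ⟨i, j, h₁, hij, -, hj⟩ := he
  exact ⟨j, by omega, j.2, hj⟩

lemma single_add_mem_intervalSet_iff {i : Fin n} (hi : i.1 < a) :
    Finsupp.single i 1 + e ∈ intervalSet n a c ↔ e ∈ intervalSet n a c := by
  refine ⟨?_, fun h => (intervalSet n a c).upper le_add_self h⟩
  rintro ⟨j, h₁, h₂, hj⟩
  have : i ≠ j := by rintro rfl; omega
  exact ⟨j, h₁, h₂, by simpa [Finsupp.single_apply, this] using hj⟩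

lemma single_add_mem_pathSet_iff {i : Fin n} (hi : i.1 < a) :
    Finsupp.single i 1 + e ∈ pathSet n a ↔ e ∈ pathSet n a := by
  refine ⟨?_, fun h => (pathSet n a).upper le_add_self h⟩
  rintro ⟨j, l, h₁, h₂, hj, hl⟩
  have hij : i ≠ j := by rintro rfl; omega
  have hil : i ≠ l := by rintro rfl; omega
  exact ⟨j, l, h₁, h₂, by simpa [Finsupp.single_apply, hij] using hj,
    by simpa [Finsupp.single_apply, hil] using hl⟩

lemma exists_eq_single_add {i : Fin n} (hi : e i ≠ 0) : ∃ e', e = Finsupp.single i 1 + e' :=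
  ⟨e - Finsupp.single i 1,
    (add_tsub_cancel_of_le (Finsupp.single_le_iff.2 (Nat.one_le_iff_ne_zero.2 hi))).symm⟩

lemma isVertexStep_interval {i : Fin n} (hi : i.1 < c) :
    IsVertexStep (idealOfVars (Fin n) K) (monomial (Finsupp.single i 1) 1)
      (monomialIdeal K (intervalSet n (i + 1) c)) (monomialIdeal K ⊥)
      (monomialIdeal K (intervalSet n (i + 1) c)) (monomialIdeal K (intervalSet n i c)) := by
  refine isVertexStep_monomialIdeal (k := 1) ?_ ?_ ?_ ?_ ?_ ?_ ?_
  · rintro e ⟨j, h₁, h₂, hj⟩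
    exact ⟨j, by omega, h₂, hj⟩
  · intro e _
    exact ⟨i, le_rfl, hi, by simp⟩
  · rintro e ⟨j, h₁, h₂, hj⟩
    obtain rfl | hij := eq_or_ne i j
    · obtain ⟨e', he'⟩ := exists_eq_single_add hj
      exact Or.inr ⟨e', trivial, he'⟩
    · have := Fin.val_ne_of_ne hij
      exact Or.inl ⟨j, by omega, h₂, hj⟩
  · exact fun e _ => single_add_mem_intervalSet_iff (Nat.lt_succ_self _)
  · rintro e ⟨j, h₁, h₂, hj⟩
    obtain ⟨e', he'⟩ := exists_eq_single_add hj
    exact ⟨j, e', trivial, by rw [he', add_comm]⟩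
  · exact fun e he => one_le_degree_of_mem_intervalSet he
  · exact fun e he => exists_intervalSet_add_single he

lemma isVertexStep_path {i : Fin n} :
    IsVertexStep (idealOfVars (Fin n) K) (monomial (Finsupp.single i 1) 1)
      (monomialIdeal K (pathSet n (i + 1))) (monomialIdeal K (intervalSet n (i + 2) n))
      (monomialIdeal K (pathSet n (i + 1))) (monomialIdeal K (pathSet n i)) := by
  refine isVertexStep_monomialIdeal (k := 2) ?_ ?_ ?_ ?_ ?_ ?_ ?_
  · rintro e ⟨j, l, h₁, h₂, hj⟩
    exact ⟨j, l, by omega, h₂, hj⟩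
  · rintro e ⟨j, h₁, h₂, hj⟩
    exact ⟨i, j, le_rfl, h₁, by simp, by simp [hj]⟩
  · rintro e ⟨j, l, h₁, h₂, hj, hl⟩
    obtain rfl | hij := eq_or_ne i j
    · obtain ⟨e', he'⟩ := exists_eq_single_add hj
      refine Or.inr ⟨e', ⟨l, h₂, l.2, ?_⟩, he'⟩
      have : i ≠ l := by rintro rfl; omega
      simpa [he', Finsupp.single_apply, this] using hl
    · have := Fin.val_ne_of_ne hij
      exact Or.inl ⟨j, l, by omega, h₂, hj, hl⟩
  · exact fun e _ => single_add_mem_pathSet_iff (Nat.lt_succ_self _)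
  · exact fun e he => exists_intervalSet_add_single (mem_intervalSet_of_mem_pathSet_succ he)
      (two_le_degree_of_mem_pathSet he)
  · exact fun e he => two_le_degree_of_mem_pathSet he
  · exact fun e he => exists_pathSet_add_single he

lemma isVertexStep_cycle {i : Fin n} (hi : i.1 + 4 ≤ n) :
    IsVertexStep (idealOfVars (Fin n) K) (monomial (Finsupp.single i 1) 1)
      (monomialIdeal K (pathSet n (i + 1))) (monomialIdeal K (intervalSet n (i + 2) (n - 1)))
      (monomialIdeal K (cycleSet n (i + 1))) (monomialIdeal K (cycleSet n i)) := by
  refine isVertexStep_monomialIdeal (k := 2) ?_ ?_ ?_ ?_ ?_ ?_ ?_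
  · rintro e ⟨j, l, h₁, h₂, hj, hl⟩
    exact mem_cycleSet.2 ⟨⟨j, l, by omega, h₂, hj, hl⟩, ⟨j, by omega, by omega, hj⟩⟩
  · rintro e ⟨j, h₁, h₂, hj⟩
    exact mem_cycleSet.2 ⟨⟨i, j, le_rfl, h₁, by simp, by simp [hj]⟩,
      ⟨j, by omega, by omega, by simp [hj]⟩⟩
  · intro e he
    obtain ⟨⟨j, l, h₁, h₂, hj, hl⟩, ⟨t, h₃, h₄, ht⟩⟩ := mem_cycleSet.1 he
    by_cases hp : e ∈ pathSet n (i + 1)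
    · exact Or.inl hp
    obtain rfl | hij := eq_or_ne i j
    · obtain ⟨e', he'⟩ := exists_eq_single_add hj
      obtain ⟨q, hq₁, hq₂, hq⟩ : ∃ q : Fin n, i.1 + 2 ≤ q.1 ∧ q.1 < n - 1 ∧ e q ≠ 0 := by
        by_contra! hno
        refine hp ⟨t, l, h₃, ?_, ht, hl⟩
        have : ¬ l.1 < n - 1 := mt (hno l h₂) hl
        have : ¬ i.1 + 2 ≤ t.1 := fun h => ht (hno t h h₄)
        omega
      refine Or.inr ⟨e', ⟨q, hq₁, hq₂, ?_⟩, he'⟩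
      have : i ≠ q := by rintro rfl; omega
      simpa [he', Finsupp.single_apply, this] using hq
    · have := Fin.val_ne_of_ne hij
      exact Or.inl ⟨j, l, by omega, h₂, hj, hl⟩
  · intro e he
    rw [single_add_mem_pathSet_iff (Nat.lt_succ_self _), mem_cycleSet]
    exact (and_iff_left he).symm
  · intro e he
    obtain ⟨h₁, h₂⟩ := mem_cycleSet.1 he
    exact exists_intervalSet_add_single h₂ (two_le_degree_of_mem_pathSet h₁)
  · exact fun e he => two_le_degree_of_mem_pathSet (mem_cycleSet.1 he).1
  · exact fun e he => exists_pathSet_add_single he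

end CycleIdeals

section Lengths

open MvPolynomial

variable {n : ℕ} (K : Type) [Field K]

/-- The length of `Ext^i(I, K)` for the monomial ideal `I` with exponent set `U`. -/
noncomputable def extLength (U : UpperSet (Fin n →₀ ℕ)) (i : ℕ) : ℕ∞ :=
  Module.length (MvPolynomial (Fin n) K) (ExtMod (MvPolynomial (Fin n) K)
    (MvPolynomial (Fin n) K ⧸ idealOfVars (Fin n) K) (monomialIdeal K U) i)

lemma isExtLinear_monomialIdeal_of_empty {U : UpperSet (Fin n →₀ ℕ)} (h : ∀ e, e ∉ U) :
    IsExtLinear (idealOfVars (Fin n) K) (monomialIdeal K U) := by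
  rw [monomialIdeal_eq_bot h]
  exact isExtLinear_bot

lemma extLength_of_empty {U : UpperSet (Fin n →₀ ℕ)} (h : ∀ e, e ∉ U) (i : ℕ) :
    extLength K U i = 0 := by
  rw [extLength, monomialIdeal_eq_bot h]
  exact length_extMod_bot i

lemma monomialIdeal_bot : monomialIdeal K (⊥ : UpperSet (Fin n →₀ ℕ)) = ⊤ :=
  monomialIdeal_eq_top fun _ => trivial

lemma isExtLinear_monomialIdeal_bot :
    IsExtLinear (idealOfVars (Fin n) K) (monomialIdeal K (⊥ : UpperSet (Fin n →₀ ℕ))) := by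
  rw [monomialIdeal_bot]
  exact isExtLinear_top

lemma extLength_bot_zero : extLength K (⊥ : UpperSet (Fin n →₀ ℕ)) 0 = 1 := by
  rw [extLength, monomialIdeal_bot]
  exact length_extMod_ideal_top_zero

lemma extLength_bot_succ (i : ℕ) : extLength K (⊥ : UpperSet (Fin n →₀ ℕ)) (i + 1) = 0 := by
  rw [extLength, monomialIdeal_bot]
  exact length_extMod_ideal_top_succ i

lemma interval_isExtLinear_and_extLength {c : ℕ} (hc : c ≤ n) (k a : ℕ) (hk : c - a = k) :
    IsExtLinear (idealOfVars (Fin n) K) (monomialIdeal K (intervalSet n a c)) ∧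
      ∀ i, extLength K (intervalSet n a c) i = (k.choose (i + 1) : ℕ) := by
  induction k generalizing a with
  | zero =>
    have hempty : ∀ e, e ∉ intervalSet n a c := by
      rintro e ⟨j, h₁, h₂, -⟩
      omega
    exact ⟨isExtLinear_monomialIdeal_of_empty K hempty, fun i => by
      simp [extLength_of_empty K hempty]⟩
  | succ k ih =>
    obtain ⟨hlin, hlen⟩ := ih (a + 1) (by omega)
    have step := isVertexStep_interval K (i := (⟨a, by omega⟩ : Fin n)) (c := c) (by simp; omega)
    refine ⟨step.isExtLinear hlin (isExtLinear_monomialIdeal_bot K)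
      (monomialIdeal_inf_mul_mul_le (k := 0) (fun _ _ => Nat.zero_le _)
        fun e he => exists_intervalSet_add_single he), fun i => ?_⟩
    cases i with
    | zero =>
      refine (step.length_zero hlin (isExtLinear_monomialIdeal_bot K)).trans ?_
      refine (congrArg₂ (· + ·) (extLength_bot_zero K) (hlen 0)).trans ?_
      simp [add_comm]
    | succ i =>
      refine (step.length_succ hlin (isExtLinear_monomialIdeal_bot K) i).trans ?_
      refine (congrArg₂ (· + ·) (congrArg₂ (· + ·) (hlen i) (extLength_bot_succ K i))
        (hlen (i + 1))).trans ?_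
      rw [Nat.choose_succ_succ k (i + 1)]
      push_cast
      ring

lemma path_isExtLinear_and_extLength (k a : ℕ) (hk : a + k = n) :
    IsExtLinear (idealOfVars (Fin n) K) (monomialIdeal K (pathSet n a)) ∧
      ∀ i, extLength K (pathSet n a) i = ((i + 1) * (k - 1).choose (i + 2) : ℕ) := by
  induction k generalizing a with
  | zero =>
    have hempty : ∀ e, e ∉ pathSet n a := by
      rintro e ⟨i, j, h₁, h₂, -⟩
      omega
    exact ⟨isExtLinear_monomialIdeal_of_empty K hempty, fun i => by
      simp [extLength_of_empty K hempty]⟩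
  | succ k ih =>
    obtain ⟨hlin, hlen⟩ := ih (a + 1) (by omega)
    obtain ⟨hlinN, hlenN⟩ :=
      interval_isExtLinear_and_extLength K (n := n) le_rfl (k - 1) (a + 2) (by omega)
    have step := isVertexStep_path K (i := (⟨a, by omega⟩ : Fin n))
    refine ⟨step.isExtLinear hlin hlinN
      (monomialIdeal_inf_mul_mul_le (k := 1) (fun _ => one_le_degree_of_mem_intervalSet)
        fun e he => exists_pathSet_add_single he), fun i => ?_⟩
    cases i with
    | zero =>
      refine (step.length_zero hlin hlinN).trans ?_
      refine (congrArg₂ (· + ·) (hlenN 0) (hlen 0)).trans ?_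
      norm_cast
      cases k with
      | zero => rfl
      | succ k => simp [Nat.choose_succ_succ k 1]
    | succ i =>
      refine (step.length_succ hlin hlinN i).trans ?_
      refine (congrArg₂ (· + ·) (congrArg₂ (· + ·) (hlen i) (hlenN (i + 1)))
        (hlen (i + 1))).trans ?_
      norm_cast
      cases k with
      | zero => simp
      | succ k =>
        simp only [Nat.add_sub_cancel]
        rw [Nat.choose_succ_succ k (i + 2)]
        ring

lemma cycle_extLength_zero (a k : ℕ) (hk : a + k + 4 = n) :
    extLength K (cycleSet n a) 0 = (k + 1 + (k + 2).choose 2 : ℕ) := by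
  obtain ⟨hlin, hlen⟩ := path_isExtLinear_and_extLength K (k + 3) (a + 1) (n := n) (by omega)
  obtain ⟨hlinN, hlenN⟩ :=
    interval_isExtLinear_and_extLength K (n := n) (c := n - 1) (by omega) (k + 1) (a + 2) (by omega)
  have step := isVertexStep_cycle K (i := (⟨a, by omega⟩ : Fin n)) (by simp; omega)
  refine (step.length_zero hlin hlinN).trans
    ((congrArg₂ (· + ·) (hlenN 0) (hlen 0)).trans ?_)
  simp

lemma cycle_extLength_succ (i a k : ℕ) (hk : a + k + 4 = n) :
    extLength K (cycleSet n a) (i + 1) = extLength K (cycleSet n (a + 1)) i +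
      ((k + 1).choose (i + 2) + (i + 2) * (k + 2).choose (i + 3) : ℕ) := by
  obtain ⟨hlin, hlen⟩ := path_isExtLinear_and_extLength K (k + 3) (a + 1) (n := n) (by omega)
  obtain ⟨hlinN, hlenN⟩ :=
    interval_isExtLinear_and_extLength K (n := n) (c := n - 1) (by omega) (k + 1) (a + 2) (by omega)
  have step := isVertexStep_cycle K (i := (⟨a, by omega⟩ : Fin n)) (by simp; omega)
  rw [Nat.cast_add, ← add_assoc]
  exact (step.length_succ hlin hlinN i).trans
    (congrArg₂ (· + ·) (congrArg₂ (· + ·) rfl (hlenN (i + 1))) (hlen (i + 1)))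

lemma cycle_extLength (i a k : ℕ) (hk : a + k + 4 = n) (hi : i ≤ k) :
    extLength K (cycleSet n a) i + ((k + 2).choose i : ℕ) =
      ((i + 1) * (k + 3).choose (i + 2) : ℕ) := by
  induction i generalizing a k with
  | zero =>
    rw [cycle_extLength_zero K a k hk]
    norm_cast
    rw [Nat.choose_succ_succ (k + 2) 1, Nat.choose_zero_right, Nat.choose_one_right]
    ring
  | succ i ih =>
    obtain ⟨k, rfl⟩ : ∃ l, k = l + 1 := ⟨k - 1, by omega⟩
    have hrec := ih (a + 1) k (by omega) (by omega)
    rw [cycle_extLength_succ K i a (k + 1) hk, Nat.choose_succ_succ (k + 2) i]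
    calc _ = (extLength K (cycleSet n (a + 1)) i + ((k + 2).choose i : ℕ)) +
          ((k + 2).choose (i + 1) + (k + 2).choose (i + 2) +
            (i + 2) * (k + 3).choose (i + 3) : ℕ) := by
          push_cast
          ring
      _ = _ := by
          rw [hrec, ← Nat.cast_add, Nat.choose_succ_succ (k + 3) (i + 2),
            Nat.choose_succ_succ (k + 2) (i + 1)]
          congr 1
          ring

lemma cycleIdeal_eq_monomialIdeal (hn : 4 ≤ n) :
    cycleIdeal n K = monomialIdeal K (cycleSet n 0) := by
  refine le_antisymm (Ideal.span_le.2 ?_) (monomialIdeal_le fun e he c => ?_)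
  · have key : ∀ i j : Fin n, i < j → ¬ cycAdj n i j →
        X i * X j ∈ monomialIdeal K (cycleSet n 0) := by
      intro i j hij hadj
      have hij' : i.1 < j.1 := hij
      have h₁ : j.1 ≠ i.1 + 1 := fun h => hadj (Or.inl (by rw [Nat.mod_eq_of_lt] <;> omega))
      have h₂ : ¬ (i.1 = 0 ∧ j.1 = n - 1) := by
        rintro ⟨hi, hj⟩
        refine hadj (Or.inr ?_)
        rw [hi, hj, Nat.sub_add_cancel (by omega), Nat.mod_self]
      rw [X, X, monomial_mul]
      refine monomial_mem_monomialIdeal (mem_cycleSet.2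
        ⟨⟨i, j, Nat.zero_le _, by omega, by simp, by simp⟩, ?_⟩) _
      by_cases hi : i.1 = 0
      · exact ⟨j, by omega, by omega, by simp⟩
      · exact ⟨i, by omega, by omega, by simp⟩
    rintro _ ⟨i, j, hij, hadj, rfl⟩
    rcases lt_or_gt_of_ne hij with h | h
    · exact key i j h hadj
    · rw [mul_comm]
      exact key j i h fun h' => hadj h'.symm
  · have key : ∀ i j : Fin n, i.1 + 2 ≤ j.1 → ¬ (i.1 = 0 ∧ j.1 = n - 1) → e i ≠ 0 → e j ≠ 0 →
        monomial e c ∈ cycleIdeal n K := by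
      intro i j hij hcyc hi hj
      have hne : i ≠ j := by rintro rfl; omega
      obtain ⟨e', rfl⟩ := exists_eq_single_add hi
      obtain ⟨e'', rfl⟩ := exists_eq_single_add (e := e') (i := j)
        (by simpa [Finsupp.single_apply, hne] using hj)
      rw [← add_assoc, ← one_mul c, ← monomial_mul, ← one_mul (1 : K), ← monomial_mul]
      refine Ideal.mul_mem_right _ _ (Ideal.subset_span ⟨i, j, hne, ?_, by simp [X]⟩)
      rintro (h | h)
      · rw [Nat.mod_eq_of_lt (by omega)] at h
        omega
      · by_cases hj' : j.1 + 1 = n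
        · rw [hj', Nat.mod_self] at h
          omega
        · rw [Nat.mod_eq_of_lt (by omega)] at h
          omega
    obtain ⟨⟨i, j, -, hij, hi, hj⟩, ⟨l, hl₁, hl₂, hl⟩⟩ := mem_cycleSet.1 he
    by_cases hcyc : i.1 = 0 ∧ j.1 = n - 1
    · by_cases hl' : l.1 = 1
      · exact key l j (by omega) (by omega) hl hj
      · exact key i l (by omega) (by omega) hi hl
    · exact key i j hij hcyc hi hj

end Lengths

lemma choose_mul_identity (d t : ℕ) :
    ((d + 1 : ℚ) * (d + t + 3).choose (d + 2) - (d + t + 2).choose d) * (d + t + 3) =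
      (d + t + 4).choose (d + 2) * ((d + 1) * (t + 1)) := by
  have h₁ := Nat.choose_succ_right_eq (d + t + 2) d
  have h₂ := Nat.choose_succ_right_eq (d + t + 2) (d + 1)
  rw [show d + t + 2 - d = t + 2 by omega] at h₁
  rw [show d + t + 2 - (d + 1) = t + 1 by omega] at h₂
  rw [Nat.choose_succ_succ (d + t + 3) (d + 1), Nat.choose_succ_succ (d + t + 2) d,
    Nat.choose_succ_succ (d + t + 2) (d + 1)]
  generalize (d + t + 2).choose d = x at *
  generalize (d + t + 2).choose (d + 1) = y at *
  generalize (d + t + 2).choose (d + 1 + 1) = z at *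
  have hxy : (y : ℚ) * (d + 1) = x * (t + 2) := by exact_mod_cast h₁
  have hyz : (z : ℚ) * (d + 1 + 1) = y * (t + 1) := by exact_mod_cast h₂
  push_cast
  linear_combination ((d : ℚ) + 2) * hxy + ((d : ℚ) + 1) * hyz


/-- For `n ≥ 5` and `1 ≤ d ≤ n - 3`, the `d`-th total Betti number of `R/Jₙ`
(the rank of the `d`-th module in any minimal free resolution of `R/Jₙ`) equals
`C(n, d+1) * d * (n-d-2) / (n-1)`. -/
theorem betti_formula (K : Type) [Field K] (n d : ℕ) (hn : 5 ≤ n)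
    (hd1 : 1 ≤ d) (hd2 : d ≤ n - 3)
    (F : MinimalFreeResolution n K (MvPolynomial (Fin n) K ⧸ cycleIdeal n K)) :
    (F.b d : ℚ) =
      (n.choose (d + 1) : ℚ) * ((d : ℚ) * ((n : ℚ) - d - 2)) / ((n : ℚ) - 1) := by
  obtain ⟨d, rfl⟩ : ∃ l, d = l + 1 := ⟨d - 1, by omega⟩
  obtain ⟨t, rfl⟩ : ∃ t, n = d + t + 4 := ⟨n - (d + 4), by omega⟩
  have hIm : cycleIdeal (d + t + 4) K ≤ MvPolynomial.idealOfVars (Fin (d + t + 4)) K := by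
    rw [cycleIdeal_eq_monomialIdeal K (by omega), ← pow_one (MvPolynomial.idealOfVars _ K)]
    exact monomialIdeal_le_pow fun e he =>
      one_le_two.trans (two_le_degree_of_mem_pathSet (mem_cycleSet.1 he).1)
  have hlen := F.length_extMod_ideal hIm d
  have hcyc := cycle_extLength K (n := d + t + 4) d 0 (d + t) (by omega) (by omega)
  rw [extLength, ← cycleIdeal_eq_monomialIdeal K (by omega), hlen] at hcyc
  have hnat : F.b (d + 1) + (d + t + 2).choose d = (d + 1) * (d + t + 3).choose (d + 2) := by
    exact_mod_cast hcyc
  have hq : (F.b (d + 1) : ℚ) + (d + t + 2).choose d = (d + 1) * (d + t + 3).choose (d + 2) := by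
    exact_mod_cast hnat
  have hne : ((d + t + 4 : ℕ) : ℚ) - 1 ≠ 0 := by
    rw [show ((d + t + 4 : ℕ) : ℚ) - 1 = d + t + 3 by push_cast; ring]
    positivity
  rw [eq_div_iff hne, eq_sub_of_add_eq hq]
  push_cast
  linear_combination choose_mul_identity d t
end

section
/- For n ≥ 4, the graded Betti numbers of R/J_n satisfy: β_{d,j} = 0 unless (d,j) = (0,0), (d,j) = (n-2, n), or 1 ≤ d ≤ n-3 and j = d+1; moreover β_{n-2,n} = 1. -/
/-- A minimal *graded* free resolution of `R/Jₙ`: a minimal free resolution together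
with degrees for the free generators making the differentials and the augmentation
homogeneous (degree-preserving, where the `i`-th generator of `F_d` has degree
`deg d i`).  The graded Betti number `β_(d,j)` is the number of generators of `F_d`
of degree `j`. -/
structure GradedMinimalFreeResolution (n : ℕ) (K : Type) [Field K] where
  toMFR : MinimalFreeResolution n K (MvPolynomial (Fin n) K ⧸ cycleIdeal n K)
  deg : ∀ d : ℕ, Fin (toMFR.b d) → ℕ
  hom_phi : ∀ (d : ℕ) (i : Fin (toMFR.b (d + 1))) (j : Fin (toMFR.b d)),
    toMFR.φ d (Finsupp.single i 1) j = 0 ∨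
      ∃ k, deg (d + 1) i = deg d j + k ∧
        toMFR.φ d (Finsupp.single i 1) j ∈ MvPolynomial.homogeneousSubmodule (Fin n) K k
  hom_eps : ∀ i : Fin (toMFR.b 0),
    ∃ p ∈ MvPolynomial.homogeneousSubmodule (Fin n) K (deg 0 i),
      Ideal.Quotient.mk (cycleIdeal n K) p = toMFR.ε (Finsupp.single i 1)

section Koszul

open MvPolynomial

/-- The sign of `i` relative to `S` in the Koszul differential. -/
def koszulSign {n : ℕ} (i : Fin n) (S : Finset (Fin n)) : ℤ :=
  (-1) ^ (S.filter (· < i)).card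

theorem koszulSign_mul_self {n : ℕ} (i : Fin n) (S : Finset (Fin n)) :
    koszulSign i S * koszulSign i S = 1 := by
  rw [koszulSign, ← mul_pow]; simp

theorem koszulSign_insert_of_lt {n : ℕ} {i j : Fin n} {S : Finset (Fin n)} (hij : i < j)
    (hi : i ∉ S) : koszulSign j (insert i S) = -koszulSign j S := by
  have : i ∉ S.filter (· < j) := by simp [hi]
  rw [koszulSign, koszulSign, Finset.filter_insert, if_pos hij, Finset.card_insert_of_notMem this,
    pow_succ]
  simp

theorem koszulSign_insert_of_gt {n : ℕ} {i j : Fin n} {S : Finset (Fin n)} (hij : j < i) :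
    koszulSign j (insert i S) = koszulSign j S := by
  rw [koszulSign, koszulSign, Finset.filter_insert, if_neg hij.not_gt]

theorem koszulSign_antisymm {n : ℕ} {i j : Fin n} {S : Finset (Fin n)} (hij : i ≠ j)
    (hi : i ∉ S) (hj : j ∉ S) :
    koszulSign i S * koszulSign j (insert i S) = -(koszulSign j S * koszulSign i (insert j S)) := by
  rcases lt_or_gt_of_ne hij with h | h
  · rw [koszulSign_insert_of_lt h hi, koszulSign_insert_of_gt h]; ring
  · rw [koszulSign_insert_of_lt h hj, koszulSign_insert_of_gt h]; ring

variable {n : ℕ} {K : Type} [Field K]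

/-- The Koszul differential on the variables with coefficients in the module `M`; a chain is
recorded by its coefficients on all squarefree exterior monomials. -/
noncomputable def koszulD {M : Type*} [AddCommGroup M] [Module (MvPolynomial (Fin n) K) M]
    (u : Finset (Fin n) → M) (S : Finset (Fin n)) : M :=
  ∑ i ∈ Sᶜ, koszulSign i S • (X i : MvPolynomial (Fin n) K) • u (insert i S)

section Module

variable {M N : Type*} [AddCommGroup M] [Module (MvPolynomial (Fin n) K) M]
  [AddCommGroup N] [Module (MvPolynomial (Fin n) K) N]

theorem koszulD_map (φ : M →ₗ[MvPolynomial (Fin n) K] N) (u : Finset (Fin n) → M)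
    (S : Finset (Fin n)) :
    koszulD (K := K) (fun S => φ (u S)) S = φ (koszulD (K := K) u S) := by
  simp [koszulD, map_sum]

theorem koszulD_add (u v : Finset (Fin n) → M) (S : Finset (Fin n)) :
    koszulD (K := K) (fun S => u S + v S) S = koszulD (K := K) u S + koszulD (K := K) v S := by
  simp [koszulD, Finset.sum_add_distrib]

theorem koszulD_sub (u v : Finset (Fin n) → M) (S : Finset (Fin n)) :
    koszulD (K := K) (fun S => u S - v S) S = koszulD (K := K) u S - koszulD (K := K) v S := by
  simp [koszulD, Finset.sum_sub_distrib, smul_sub]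

theorem koszulD_smul (r : MvPolynomial (Fin n) K) (u : Finset (Fin n) → M)
    (S : Finset (Fin n)) :
    koszulD (K := K) (fun S => r • u S) S = r • koszulD (K := K) u S := by
  simp only [koszulD, Finset.smul_sum]
  refine Finset.sum_congr rfl fun i _ => ?_
  rw [smul_comm r, smul_comm r]

theorem koszulD_koszulD (u : Finset (Fin n) → M) (S : Finset (Fin n)) :
    koszulD (K := K) (koszulD (K := K) u) S = 0 := by
  classical
  simp only [koszulD, Finset.smul_sum]
  rw [Finset.sum_sigma']
  refine Finset.sum_involution (fun p _ => ⟨p.2, p.1⟩) ?_ ?_ ?_ ?_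
  · rintro ⟨i, j⟩ h
    simp only [Finset.mem_sigma, Finset.mem_compl, Finset.mem_insert, not_or] at h
    obtain ⟨hi, hji, hj⟩ := h
    simp only
    rw [Finset.insert_comm j i]
    rw [smul_comm (X i : MvPolynomial (Fin n) K) (koszulSign j _),
      smul_comm (X j : MvPolynomial (Fin n) K) (koszulSign i _), smul_smul,
      smul_smul (koszulSign j S), koszulSign_antisymm (Ne.symm hji) hi hj,
      smul_comm (X i : MvPolynomial (Fin n) K) (X j), neg_smul,
      neg_add_cancel]
  · rintro ⟨i, j⟩ h _ heq
    simp only [Finset.mem_sigma, Finset.mem_compl, Finset.mem_insert, not_or] at h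
    simp only [Sigma.mk.injEq] at heq
    exact h.2.1 heq.1
  · rintro ⟨i, j⟩ h
    simp only [Finset.mem_sigma, Finset.mem_compl, Finset.mem_insert, not_or] at h ⊢
    exact ⟨h.2.2, Ne.symm h.2.1, h.1⟩
  · rintro ⟨i, j⟩ _
    rfl

end Module

/-- The exponent vector of the squarefree monomial with support `S`. -/
noncomputable def sqfreeExp (S : Finset (Fin n)) : Fin n →₀ ℕ :=
  Finsupp.indicator S fun _ _ => 1

theorem sqfreeExp_apply (S : Finset (Fin n)) (i : Fin n) :
    sqfreeExp S i = if i ∈ S then 1 else 0 := by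
  simp [sqfreeExp, Finsupp.indicator_apply]

theorem degree_sqfreeExp (S : Finset (Fin n)) : (sqfreeExp S).degree = S.card := by
  rw [Finsupp.degree_eq_sum]
  simp [sqfreeExp_apply]

theorem sqfreeExp_insert {i : Fin n} {S : Finset (Fin n)} (hi : i ∉ S) :
    sqfreeExp (insert i S) = Finsupp.single i 1 + sqfreeExp S := by
  classical
  ext k
  rw [Finsupp.add_apply, sqfreeExp_apply, sqfreeExp_apply, Finsupp.single_apply]
  by_cases hk : i = k
  · subst hk; simp [hi]
  · simp [hk, Ne.symm hk]

theorem support_add_sqfreeExp (m : Fin n →₀ ℕ) (S : Finset (Fin n)) :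
    (m + sqfreeExp S).support = m.support ∪ S := by
  ext k
  simp only [Finsupp.mem_support_iff, Finsupp.add_apply, sqfreeExp_apply, Finset.mem_union]
  split_ifs with h <;> simp [h]

/-- The Koszul differential on scalar chains supported on the subsets of `σ`. -/
def scalarD (σ : Finset (Fin n)) (c : Finset (Fin n) → K) (S : Finset (Fin n)) : K :=
  ∑ i ∈ σ \ S, (koszulSign i S : K) * c (insert i S)

/-- The differential of a chain of polynomials can be computed in each multidegree. -/
theorem coeff_koszulD {g : Finset (Fin n) → MvPolynomial (Fin n) K}
    {γ : (Fin n →₀ ℕ) → Finset (Fin n) → K}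
    (h : ∀ S m, coeff m (g S) = γ (m + sqfreeExp S) S) (S : Finset (Fin n)) (m : Fin n →₀ ℕ) :
    coeff m (koszulD (K := K) g S) =
      scalarD (m + sqfreeExp S).support (γ (m + sqfreeExp S)) S := by
  classical
  rw [koszulD, scalarD, coeff_sum, support_add_sqfreeExp, Finset.union_sdiff_right]
  have hsub : m.support \ S ⊆ Sᶜ := fun i hi => by simp_all
  rw [← Finset.sum_subset hsub]
  · refine Finset.sum_congr rfl fun i hi => ?_
    simp only [Finset.mem_sdiff] at hi
    have hm : Finsupp.single i 1 ≤ m := by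
      simpa [Nat.one_le_iff_ne_zero] using hi.1
    have h1 : m - Finsupp.single i 1 + sqfreeExp (insert i S) = m + sqfreeExp S := by
      rw [sqfreeExp_insert hi.2, ← add_assoc, tsub_add_cancel_of_le hm]
    rw [coeff_smul, smul_eq_mul, coeff_X_mul', if_pos hi.1, h, h1, zsmul_eq_mul]
  · intro i hi hi'
    have : i ∉ m.support := by
      simp only [Finset.mem_sdiff, Finset.mem_compl] at hi hi'; tauto
    rw [coeff_smul, smul_eq_mul, coeff_X_mul', if_neg this, smul_zero]

/-- The part of a chain of polynomials in a given multidegree. -/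
noncomputable def multiPart (f : Finset (Fin n) → MvPolynomial (Fin n) K) (a : Fin n →₀ ℕ)
    (S : Finset (Fin n)) : K :=
  open Classical in if sqfreeExp S ≤ a then coeff (a - sqfreeExp S) (f S) else 0

theorem coeff_eq_multiPart (f : Finset (Fin n) → MvPolynomial (Fin n) K) (S : Finset (Fin n))
    (m : Fin n →₀ ℕ) : coeff m (f S) = multiPart f (m + sqfreeExp S) S := by
  simp [multiPart]

theorem exists_of_multiPart_ne_zero {f : Finset (Fin n) → MvPolynomial (Fin n) K}
    {a : Fin n →₀ ℕ} {S : Finset (Fin n)} (h : multiPart f a S ≠ 0) :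
    ∃ m, coeff m (f S) ≠ 0 ∧ m + sqfreeExp S = a := by
  unfold multiPart at h
  split_ifs at h with hle
  · exact ⟨_, h, tsub_add_cancel_of_le hle⟩
  · exact absurd rfl h

/-- Scalar chains given in each multidegree assemble to a chain of polynomials, provided that
they vanish in the multidegrees in which a fixed chain `f` vanishes. -/
theorem exists_chain_of_multiPart (f : Finset (Fin n) → MvPolynomial (Fin n) K)
    (γ : (Fin n →₀ ℕ) → Finset (Fin n) → K) (h : ∀ a, multiPart f a = 0 → γ a = 0) :
    ∃ g : Finset (Fin n) → MvPolynomial (Fin n) K,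
      ∀ S m, coeff m (g S) = γ (m + sqfreeExp S) S := by
  classical
  let A : Finset (Fin n →₀ ℕ) :=
    Finset.univ.biUnion fun S => (f S).support.image (· + sqfreeExp S)
  have hA : ∀ a, a ∉ A → γ a = 0 := by
    intro a ha
    refine h a (funext fun S => ?_)
    by_contra hne
    obtain ⟨m, hm, rfl⟩ := exists_of_multiPart_ne_zero hne
    exact ha (Finset.mem_biUnion.2 ⟨S, Finset.mem_univ _,
      Finset.mem_image.2 ⟨m, by simpa [mem_support_iff] using hm, rfl⟩⟩)
  let B : Finset (Fin n) → Finset (Fin n →₀ ℕ) := fun S =>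
    (A.filter (sqfreeExp S ≤ ·)).image (· - sqfreeExp S)
  refine ⟨fun S => ∑ m ∈ B S, monomial m (γ (m + sqfreeExp S) S), fun S m => ?_⟩
  simp only [coeff_sum, coeff_monomial]
  rw [Finset.sum_ite_eq' (B S) m]
  split_ifs with hm
  · rfl
  · rw [hA, Pi.zero_apply]
    intro hmA
    refine hm (Finset.mem_image.2 ⟨_, Finset.mem_filter.2 ⟨hmA, ?_⟩, ?_⟩)
    · exact le_add_self
    · simp

/-- The contracting homotopy in the direction of the variable `k`. -/
def scalarH (k : Fin n) (c : Finset (Fin n) → K) (S : Finset (Fin n)) : K :=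
  if k ∈ S then (koszulSign k (S.erase k) : K) * c (S.erase k) else 0

theorem scalarD_scalarH {σ : Finset (Fin n)} {k : Fin n} (hk : k ∈ σ)
    {c : Finset (Fin n) → K} {S : Finset (Fin n)}
    (h : k ∈ S → scalarD σ c (S.erase k) = 0) : scalarD σ (scalarH k c) S = c S := by
  have hsq : ∀ T : Finset (Fin n), (koszulSign k T : K) * (koszulSign k T : K) = 1 := fun T => by
    rw [← Int.cast_mul, koszulSign_mul_self, Int.cast_one]
  by_cases hS : k ∈ S
  · obtain ⟨T, hT, rfl⟩ : ∃ T, k ∉ T ∧ S = insert k T :=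
      ⟨S.erase k, Finset.notMem_erase k S, (Finset.insert_erase hS).symm⟩
    have h0 := h hS
    rw [Finset.erase_insert hT, scalarD] at h0
    have hins : σ \ T = insert k (σ \ insert k T) := by
      ext x; simp only [Finset.mem_sdiff, Finset.mem_insert]
      by_cases hx : x = k
      · subst hx; simp [hk, hT]
      · simp [hx]
    rw [hins, Finset.sum_insert (by simp)] at h0
    have key : scalarD σ (scalarH k c) (insert k T) =
        -(koszulSign k T : K) * ∑ i ∈ σ \ insert k T, (koszulSign i T : K) * c (insert i T) := by
      rw [scalarD, Finset.mul_sum]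
      refine Finset.sum_congr rfl fun i hi => ?_
      simp only [Finset.mem_sdiff, Finset.mem_insert, not_or] at hi
      have he : (insert i (insert k T)).erase k = insert i T := by
        rw [Finset.insert_comm, Finset.erase_insert]
        simp [Ne.symm hi.2.1, hT]
      have hs : (koszulSign i (insert k T) : K) * (koszulSign k (insert i T) : K) =
          -(koszulSign k T : K) * (koszulSign i T : K) := by
        rcases lt_or_gt_of_ne hi.2.1 with hlt | hlt
        · rw [koszulSign_insert_of_gt hlt, koszulSign_insert_of_lt hlt hi.2.2]; push_cast; ring
        · rw [koszulSign_insert_of_gt hlt, koszulSign_insert_of_lt hlt hT]; push_cast; ring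
      rw [scalarH, if_pos (by simp), he, ← mul_assoc, hs, mul_assoc]
    rw [key, eq_neg_of_add_eq_zero_right h0]
    linear_combination c (insert k T) * hsq T
  · rw [scalarD, Finset.sum_eq_single k]
    · rw [scalarH, if_pos (by simp), Finset.erase_insert hS, ← mul_assoc, hsq, one_mul]
    · intro i hi hik
      rw [scalarH, if_neg, mul_zero]
      simp only [Finset.mem_insert, not_or]
      exact ⟨Ne.symm hik, hS⟩
    · intro hkS
      simp [hk, hS] at hkS

/-- The Koszul complex of the polynomial ring is exact away from the constants. -/
theorem exists_koszulD_eq {f : Finset (Fin n) → MvPolynomial (Fin n) K}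
    (hf : ∀ S, koszulD (K := K) f S = 0) (h0 : constantCoeff (f ∅) = 0) :
    ∃ g : Finset (Fin n) → MvPolynomial (Fin n) K, (∀ S, koszulD (K := K) g S = f S) ∧ g ∅ = 0 ∧
      ∀ S m, coeff m (g S) ≠ 0 → ∃ S' m', coeff m' (f S') ≠ 0 ∧ S.card = S'.card + 1 ∧
        m.degree + S.card = m'.degree + S'.card := by
  classical
  let γ : (Fin n →₀ ℕ) → Finset (Fin n) → K := fun a =>
    if h : a.support.Nonempty then scalarH h.choose (multiPart f a) else 0
  obtain ⟨g, hg⟩ := exists_chain_of_multiPart f γ (by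
    intro a ha
    simp only [γ]
    split_ifs with h
    · funext S; simp [scalarH, ha]
    · rfl)
  refine ⟨g, fun S => ?_, ?_, ?_⟩
  · ext m
    rw [coeff_koszulD hg, coeff_eq_multiPart f]
    by_cases h : (m + sqfreeExp S).support.Nonempty
    · simp only [γ, dif_pos h]
      refine scalarD_scalarH h.choose_spec fun hk => ?_
      set k := h.choose
      have hkT : sqfreeExp S = Finsupp.single k 1 + sqfreeExp (S.erase k) := by
        rw [← sqfreeExp_insert (Finset.notMem_erase k S), Finset.insert_erase hk]
      have := coeff_koszulD (coeff_eq_multiPart f) (S.erase k) (m + Finsupp.single k 1)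
      rw [hf, coeff_zero, add_assoc, ← hkT] at this
      exact this.symm
    · simp only [γ, dif_neg h]
      rw [Finset.not_nonempty_iff_eq_empty, support_add_sqfreeExp, Finset.union_eq_empty] at h
      obtain ⟨hm, rfl⟩ := h
      rw [← coeff_eq_multiPart, Finsupp.support_eq_empty.1 hm]
      simpa [scalarD, constantCoeff_eq] using h0.symm
  · ext m
    rw [hg, coeff_zero]
    simp only [γ]
    split_ifs <;> simp [scalarH]
  · intro S m hm
    rw [hg] at hm
    simp only [γ] at hm
    split_ifs at hm with h
    · unfold scalarH at hm
      split_ifs at hm with hk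
      · obtain ⟨m', hm', he⟩ := exists_of_multiPart_ne_zero (right_ne_zero_of_mul hm)
        refine ⟨_, m', hm', (Finset.card_erase_add_one hk).symm, ?_⟩
        have := congrArg Finsupp.degree he
        rw [map_add, map_add, degree_sqfreeExp, degree_sqfreeExp] at this
        exact this.symm
      · exact absurd rfl hm
    · exact absurd rfl hm

end Koszul

section Cycle

open MvPolynomial

variable {n : ℕ} {K : Type} [Field K]

/-- A set of vertices is a face of the `n`-cycle if its elements are pairwise adjacent. -/
def IsCycleFace (n : ℕ) (T : Finset (Fin n)) : Prop :=
  ∀ i ∈ T, ∀ j ∈ T, i ≠ j → cycAdj n i j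

theorem cycAdj_iff [NeZero n] (i j : Fin n) : cycAdj n i j ↔ j = i + 1 ∨ i = j + 1 := by
  simp only [cycAdj, Fin.ext_iff, Fin.val_add, Fin.val_one', Nat.add_mod_mod]
  constructor <;> rintro (h | h) <;> simp [h]

theorem Fin.add_one_ne_self_of_two_le [NeZero n] (hn : 2 ≤ n) (v : Fin n) : v + 1 ≠ v := by
  intro h
  have := congrArg Fin.val (add_eq_left.1 h)
  rw [Fin.val_one', Nat.mod_eq_of_lt (by omega)] at this
  simp at this

theorem isCycleFace_singleton (v : Fin n) : IsCycleFace n {v} := by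
  intro i hi j hj hij
  simp only [Finset.mem_singleton] at hi hj
  exact absurd (hi.trans hj.symm) hij

theorem isCycleFace_edge [NeZero n] (v : Fin n) : IsCycleFace n {v, v + 1} := by
  intro i hi j hj hij
  simp only [Finset.mem_insert, Finset.mem_singleton] at hi hj
  rw [cycAdj_iff]
  grind

theorem IsCycleFace.card_le_two (hn : 4 ≤ n) {T : Finset (Fin n)} (hT : IsCycleFace n T) :
    T.card ≤ 2 := by
  by_contra! h
  obtain ⟨a, b, c, ha, hb, hc, hab, hac, hbc⟩ := Finset.two_lt_card_iff.1 h
  have key : ∀ i j : Fin n, cycAdj n i j →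
      i.val + 1 = j.val ∨ j.val + 1 = i.val ∨ (i.val = 0 ∧ j.val + 1 = n) ∨
        (j.val = 0 ∧ i.val + 1 = n) := by
    intro i j hij
    have hi := i.2
    have hj := j.2
    rcases hij with h | h
    · rcases Nat.lt_or_ge (i.val + 1) n with h' | h'
      · rw [Nat.mod_eq_of_lt h'] at h; omega
      · have : i.val + 1 = n := by omega
        rw [this, Nat.mod_self] at h; omega
    · rcases Nat.lt_or_ge (j.val + 1) n with h' | h'
      · rw [Nat.mod_eq_of_lt h'] at h; omega
      · have : j.val + 1 = n := by omega
        rw [this, Nat.mod_self] at h; omega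
  have h1 := key a b (hT a ha b hb hab)
  have h2 := key a c (hT a ha c hc hac)
  have h3 := key b c (hT b hb c hc hbc)
  rw [Ne, Fin.ext_iff] at hab hac hbc
  omega

theorem IsCycleFace.eq_edge_of_card_eq_two [NeZero n] {T : Finset (Fin n)}
    (hT : IsCycleFace n T) (hc : T.card = 2) : ∃ v, T = {v, v + 1} := by
  obtain ⟨v, w, hvw, rfl⟩ := Finset.card_eq_two.1 hc
  rcases (cycAdj_iff v w).1 (hT v (by simp) w (by simp) hvw) with rfl | rfl
  · exact ⟨v, rfl⟩
  · exact ⟨w, Finset.pair_comm _ _⟩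

/-- A function on the vertices of the cycle with prescribed increments of total sum zero. -/
theorem exists_cyclic_primitive [NeZero n] (t : Fin n → K) (ht : ∑ v, t v = 0) :
    ∃ b : Fin n → K, ∀ v, b (v + 1) - b v = t v := by
  classical
  obtain ⟨k, rfl⟩ : ∃ k, n = k + 1 := Nat.exists_eq_succ_of_ne_zero (NeZero.ne n)
  refine ⟨fun v => ∑ i ∈ Finset.univ.filter (· < v), t i, fun v => ?_⟩
  by_cases hv : v = Fin.last k
  · subst hv
    have hins : (Finset.univ : Finset (Fin (k + 1))) =
        insert (Fin.last k) (Finset.univ.filter (· < Fin.last k)) := by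
      ext x; simp [Fin.lt_last_iff_ne_last, em]
    rw [hins, Finset.sum_insert (by simp)] at ht
    rw [Fin.last_add_one]
    simp only [Fin.not_lt_zero, Finset.filter_false, Finset.sum_empty]
    linear_combination -ht
  · have hins : Finset.univ.filter (· < v + 1) = insert v (Finset.univ.filter (· < v)) := by
      ext x
      have : (v + 1).val = v.val + 1 := by
        have hlt := Fin.lt_last_iff_ne_last.2 hv
        rw [Fin.lt_def, Fin.val_last] at hlt
        rw [Fin.val_add, Fin.val_one', Nat.add_mod_mod, Nat.mod_eq_of_lt (by omega)]
      simp only [Finset.mem_filter, Finset.mem_univ, true_and, Finset.mem_insert, Fin.lt_def,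
        Fin.ext_iff]
      omega
    simp only [hins]
    rw [Finset.sum_insert (by simp)]
    ring

open Fin.CommRing in
/-- A function on a set of all but at most one vertex of the cycle which agrees on adjacent
vertices is constant. -/
theorem exists_const_of_eq_succ {α : Type*} [NeZero n] {σ : Finset (Fin n)} {v₀ : Fin n}
    (hσ : ∀ v, v ≠ v₀ → v ∈ σ) {b : Fin n → α}
    (hb : ∀ v ∈ σ, v + 1 ∈ σ → v + 1 ≠ v → b (v + 1) = b v) : ∃ κ, ∀ v ∈ σ, b v = κ := by
  have key : ∀ k : ℕ, k + 1 < n → b (v₀ + 1 + (k : Fin n)) = b (v₀ + 1) := by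
    have hne : ∀ k : ℕ, k + 1 < n → v₀ + 1 + (k : Fin n) ≠ v₀ := by
      intro k hk h
      rw [add_assoc, add_eq_left] at h
      have h' : ((k + 1 : ℕ) : Fin n) = 0 := by push_cast; rw [add_comm]; exact h
      have := congrArg Fin.val h'
      rw [Fin.val_natCast, Nat.mod_eq_of_lt hk] at this
      simp at this
    intro k
    induction k with
    | zero => intro _; simp
    | succ k ih =>
      intro hk
      rw [← ih (by omega), Nat.cast_succ, ← add_assoc]
      have h1 := hne (k + 1) hk
      rw [Nat.cast_succ, ← add_assoc] at h1
      exact hb _ (hσ _ (hne k (by omega))) (hσ _ h1) (Fin.add_one_ne_self_of_two_le (by omega) _)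
  refine ⟨b (v₀ + 1), fun v hv => ?_⟩
  by_cases hv0 : v = v₀
  · subst hv0
    by_cases h1 : v + 1 = v
    · rw [h1]
    · exact (hb v hv (hσ _ h1) h1).symm
  · have hk := (v - (v₀ + 1)).2
    have hv' : v₀ + 1 + (((v - (v₀ + 1)).val : ℕ) : Fin n) = v := by
      rw [Fin.cast_val_eq_self]; abel
    rw [← hv']
    refine key _ ?_
    by_contra! hlt
    refine hv0 ?_
    have he : (v - (v₀ + 1)).val + 1 = n := by omega
    have : (((v - (v₀ + 1)).val + 1 : ℕ) : Fin n) = 0 := by rw [he]; simp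
    rw [Nat.cast_succ, Fin.cast_val_eq_self] at this
    have h2 : v - v₀ = 0 := by rw [← this]; abel
    exact sub_eq_zero.1 h2

theorem scalarD_of_sdiff_eq_singleton {σ S : Finset (Fin n)} {v : Fin n} (h : σ \ S = {v})
    (c : Finset (Fin n) → K) : scalarD σ c S = (koszulSign v S : K) * c (insert v S) := by
  rw [scalarD, h, Finset.sum_singleton]

theorem scalarD_of_sdiff_eq_pair {σ S : Finset (Fin n)} {v w : Fin n} (hvw : v ≠ w)
    (h : σ \ S = {v, w}) (c : Finset (Fin n) → K) : scalarD σ c S =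
      (koszulSign v S : K) * c (insert v S) + (koszulSign w S : K) * c (insert w S) := by
  rw [scalarD, h, Finset.sum_pair hvw]

theorem koszulSign_cast_mul_self (i : Fin n) (S : Finset (Fin n)) :
    (koszulSign i S : K) * (koszulSign i S : K) = 1 := by
  rw [← Int.cast_mul, koszulSign_mul_self, Int.cast_one]

theorem koszulSign_cast_antisymm {i j : Fin n} {S : Finset (Fin n)} (hij : i ≠ j)
    (hi : i ∉ S) (hj : j ∉ S) :
    (koszulSign i S : K) * (koszulSign j (insert i S) : K) =
      -((koszulSign j S : K) * (koszulSign i (insert j S) : K)) := by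
  have := congrArg (Int.cast : ℤ → K) (koszulSign_antisymm hij hi hj)
  push_cast at this
  exact this

/-- The value of a scalar chain on the edge from `v` to `v + 1`, oriented along the cycle. -/
def edgeValue [NeZero n] (σ : Finset (Fin n)) (c : Finset (Fin n) → K) (v : Fin n) : K :=
  (koszulSign v (σ \ {v, v + 1}) : K) * (koszulSign (v + 1) (insert v (σ \ {v, v + 1})) : K) *
    c (σ \ {v, v + 1})

/-- The value of a scalar chain on a vertex. -/
def vertexValue (σ : Finset (Fin n)) (c : Finset (Fin n) → K) (v : Fin n) : K :=
  (koszulSign v (σ.erase v) : K) * c (σ.erase v)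

theorem sdiff_pair_facts [NeZero n] (hn : 2 ≤ n) {σ : Finset (Fin n)} {v : Fin n} (hv : v ∈ σ)
    (hv' : v + 1 ∈ σ) : σ \ (σ \ {v, v + 1}) = {v, v + 1} ∧
      insert v (σ \ {v, v + 1}) = σ.erase (v + 1) ∧
      insert (v + 1) (σ \ {v, v + 1}) = σ.erase v := by
  have hne := Fin.add_one_ne_self_of_two_le hn v
  refine ⟨?_, ?_, ?_⟩
  · rw [Finset.sdiff_sdiff_eq_self]
    intro x hx
    simp only [Finset.mem_insert, Finset.mem_singleton] at hx
    rcases hx with rfl | rfl <;> assumption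
  all_goals
    ext x
    simp only [Finset.mem_insert, Finset.mem_sdiff, Finset.mem_singleton, Finset.mem_erase]
    grind

/-- In terms of oriented edges the differential is the coboundary of the cycle. -/
theorem edgeValue_scalarD [NeZero n] (hn : 2 ≤ n) {σ : Finset (Fin n)} {v : Fin n} (hv : v ∈ σ)
    (hv' : v + 1 ∈ σ) (c : Finset (Fin n) → K) :
    edgeValue σ (scalarD σ c) v = vertexValue σ c (v + 1) - vertexValue σ c v := by
  obtain ⟨h1, h2, h3⟩ := sdiff_pair_facts hn hv hv'
  have hne := Fin.add_one_ne_self_of_two_le hn v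
  rw [edgeValue, scalarD_of_sdiff_eq_pair hne.symm h1, vertexValue, vertexValue, ← h2, ← h3]
  have ha := koszulSign_cast_antisymm (K := K) (S := σ \ {v, v + 1}) hne (by simp) (by simp)
  have s1 := koszulSign_cast_mul_self (K := K) v (σ \ {v, v + 1})
  have s2 := koszulSign_cast_mul_self (K := K) (v + 1) (σ \ {v, v + 1})
  generalize (koszulSign v (σ \ {v, v + 1}) : K) = p at *
  generalize (koszulSign (v + 1) (σ \ {v, v + 1}) : K) = q at *
  generalize (koszulSign (v + 1) (insert v (σ \ {v, v + 1})) : K) = r at *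
  generalize (koszulSign v (insert (v + 1) (σ \ {v, v + 1})) : K) = s at *
  generalize c (insert v (σ \ {v, v + 1})) = x
  generalize c (insert (v + 1) (σ \ {v, v + 1})) = y
  linear_combination r * x * s1 - s * y * s2 + q * y * ha

theorem edgeValue_injective [NeZero n] {σ : Finset (Fin n)} {v : Fin n}
    {c c' : Finset (Fin n) → K} (h : edgeValue σ c v = edgeValue σ c' v) :
    c (σ \ {v, v + 1}) = c' (σ \ {v, v + 1}) := by
  have s1 := koszulSign_cast_mul_self (K := K) v (σ \ {v, v + 1})
  have s2 := koszulSign_cast_mul_self (K := K) (v + 1) (insert v (σ \ {v, v + 1}))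
  unfold edgeValue at h
  refine mul_left_cancel₀ (left_ne_zero_of_mul (b := (koszulSign v (σ \ {v, v + 1}) : K) *
    (koszulSign (v + 1) (insert v (σ \ {v, v + 1})) : K)) ?_) h
  have : (koszulSign v (σ \ {v, v + 1}) : K) *
      (koszulSign (v + 1) (insert v (σ \ {v, v + 1})) : K) *
      ((koszulSign v (σ \ {v, v + 1}) : K) *
      (koszulSign (v + 1) (insert v (σ \ {v, v + 1})) : K)) = 1 := by
    linear_combination (koszulSign (v + 1) (insert v (σ \ {v, v + 1})) : K) ^ 2 * s1 + s2
  rw [this]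
  exact one_ne_zero

/-- The scalar chain with prescribed vertex values. -/
def vertexChain (σ : Finset (Fin n)) (b : Fin n → K) (T : Finset (Fin n)) : K :=
  ∑ x ∈ σ \ T, (koszulSign x T : K) * b x

theorem vertexValue_vertexChain {σ : Finset (Fin n)} {v : Fin n} (hv : v ∈ σ) (b : Fin n → K) :
    vertexValue σ (vertexChain σ b) v = b v := by
  have : σ \ σ.erase v = {v} := by
    ext x; simp only [Finset.mem_sdiff, Finset.mem_erase, Finset.mem_singleton]; grind
  rw [vertexValue, vertexChain, this, Finset.sum_singleton, ← mul_assoc,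
    koszulSign_cast_mul_self, one_mul]

/-- Every scalar chain on the edges is a coboundary if some vertex is missing or the sum along
the cycle vanishes. -/
theorem exists_scalarD_eq_on_edges [NeZero n] (hn : 4 ≤ n) {σ : Finset (Fin n)}
    (c : Finset (Fin n) → K) (hc : σ = Finset.univ → ∑ v, edgeValue σ c v = 0) :
    ∃ g : Finset (Fin n) → K, ∀ S, S ⊆ σ → IsCycleFace n (σ \ S) → S.card + 2 = σ.card →
      scalarD σ g S = c S := by
  classical
  obtain ⟨b, hb⟩ : ∃ b : Fin n → K, ∀ v ∈ σ, b (v + 1) - b v = edgeValue σ c v := by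
    by_cases hσ : σ = Finset.univ
    · obtain ⟨b, hb⟩ := exists_cyclic_primitive _ (hc hσ)
      exact ⟨b, fun v _ => hb v⟩
    · obtain ⟨v₀, hv₀⟩ : ∃ v₀, v₀ ∉ σ := by
        by_contra! h
        exact hσ (Finset.eq_univ_of_forall h)
      obtain ⟨b, hb⟩ := exists_cyclic_primitive
        (edgeValue σ c - Pi.single v₀ (∑ v, edgeValue σ c v)) (by simp)
      refine ⟨b, fun v hv => ?_⟩
      have : v ≠ v₀ := fun h => hv₀ (h ▸ hv)
      simp [hb, this]
  refine ⟨vertexChain σ b, fun S hS hface hcard => ?_⟩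
  obtain ⟨v, hv⟩ := hface.eq_edge_of_card_eq_two (by rw [Finset.card_sdiff_of_subset hS]; omega)
  have hSv : S = σ \ {v, v + 1} := by rw [← hv, Finset.sdiff_sdiff_eq_self hS]
  have hvσ : v ∈ σ := (Finset.mem_sdiff.1 (hv ▸ by simp : v ∈ σ \ S)).1
  have hvσ' : v + 1 ∈ σ := (Finset.mem_sdiff.1 (hv ▸ by simp : v + 1 ∈ σ \ S)).1
  rw [hSv]
  refine edgeValue_injective ?_
  rw [edgeValue_scalarD (by omega) hvσ hvσ', vertexValue_vertexChain hvσ,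
    vertexValue_vertexChain hvσ', hb v hvσ]

/-- A scalar cocycle on the vertices is a coboundary on a vertex or on a connected set of almost
all vertices. -/
theorem exists_scalarD_eq_on_vertices [NeZero n] (hn : 4 ≤ n) {σ : Finset (Fin n)}
    (c : Finset (Fin n) → K)
    (hc : ∀ S ⊆ σ, IsCycleFace n (σ \ S) → scalarD σ c S = 0)
    (hσ : σ.card ≤ 1 ∨ n ≤ σ.card + 1) :
    ∃ g : Finset (Fin n) → K, ∀ S, S ⊆ σ → S.card + 1 = σ.card → scalarD σ g S = c S := by
  obtain ⟨κ, hκ⟩ : ∃ κ, ∀ v ∈ σ, vertexValue σ c v = κ := by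
    rcases hσ with hσ | hσ
    · rcases σ.eq_empty_or_nonempty with rfl | ⟨v, hv⟩
      · exact ⟨0, by simp⟩
      · exact ⟨vertexValue σ c v, fun w hw => by rw [Finset.card_le_one.1 hσ w hw v hv]⟩
    · obtain ⟨v₀, hv₀⟩ : ∃ v₀, ∀ v, v ≠ v₀ → v ∈ σ := by
        have hle : σᶜ.card ≤ 1 := by rw [Finset.card_compl, Fintype.card_fin]; omega
        rcases σᶜ.eq_empty_or_nonempty with h | ⟨v₀, hv₀⟩
        · refine ⟨0, fun v _ => ?_⟩
          rw [Finset.compl_eq_empty_iff] at h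
          simp [h]
        · refine ⟨v₀, fun v hv => ?_⟩
          by_contra hvσ
          exact hv (Finset.card_le_one.1 hle v (by simpa using hvσ) v₀ hv₀)
      refine exists_const_of_eq_succ hv₀ fun v hv hv' _ => ?_
      have hn2 : 2 ≤ n := by omega
      have h0 : edgeValue σ (scalarD σ c) v = 0 := by
        rw [edgeValue, hc _ Finset.sdiff_subset, mul_zero]
        rw [(sdiff_pair_facts hn2 hv hv').1]
        exact isCycleFace_edge v
      rw [edgeValue_scalarD hn2 hv hv'] at h0
      exact sub_eq_zero.1 h0
  refine ⟨fun _ => κ, fun S hS hcard => ?_⟩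
  obtain ⟨v, hv⟩ := Finset.card_eq_one.1
    (by rw [Finset.card_sdiff_of_subset hS]; omega : (σ \ S).card = 1)
  have hvσ : v ∈ σ := (Finset.mem_sdiff.1 (hv ▸ by simp : v ∈ σ \ S)).1
  have hSv : S = σ.erase v := by
    rw [Finset.erase_eq, ← hv, Finset.sdiff_sdiff_eq_self hS]
  rw [scalarD_of_sdiff_eq_singleton hv, ← hκ v hvσ, vertexValue, ← hSv, ← mul_assoc,
    koszulSign_cast_mul_self, one_mul]

/-- The scalar Koszul complex of the cycle in a squarefree multidegree is exact outside the
homological degrees in which the Betti numbers are concentrated. -/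
theorem exists_scalarD_eq_of_face [NeZero n] (hn : 4 ≤ n) {σ : Finset (Fin n)} {d : ℕ}
    (c : Finset (Fin n) → K) (hd : ∀ S, c S ≠ 0 → S.card = d)
    (hc : ∀ S ⊆ σ, IsCycleFace n (σ \ S) → scalarD σ c S = 0)
    (h0 : ¬(d = 0 ∧ σ.card = 0)) (h1 : ¬(1 ≤ d ∧ d ≤ n - 3 ∧ σ.card = d + 1))
    (h2 : d = n - 2 → σ.card = n → ∑ v, edgeValue σ c v = 0) :
    ∃ g : Finset (Fin n) → K, ∀ S ⊆ σ, IsCycleFace n (σ \ S) → scalarD σ g S = c S := by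
  suffices h : ∃ g : Finset (Fin n) → K, ∀ S, S ⊆ σ → IsCycleFace n (σ \ S) → S.card = d →
      scalarD σ g S = c S by
    obtain ⟨g, hg⟩ := h
    refine ⟨fun S => if S.card = d + 1 then g S else 0, fun S hS hf => ?_⟩
    by_cases hSd : S.card = d
    · rw [← hg S hS hf hSd]
      refine Finset.sum_congr rfl fun i hi => ?_
      beta_reduce
      rw [if_pos (by rw [Finset.card_insert_of_notMem (Finset.mem_sdiff.1 hi).2, hSd])]
    · rw [not_imp_comm.1 (hd S) hSd]
      refine Finset.sum_eq_zero fun i hi => ?_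
      beta_reduce
      rw [if_neg (by rw [Finset.card_insert_of_notMem (Finset.mem_sdiff.1 hi).2]; omega), mul_zero]
  have hcardle : σ.card ≤ n := by simpa using Finset.card_le_univ σ
  rcases Nat.lt_or_ge σ.card d with hlt | hge
  · exact ⟨0, fun S hS _ hSd => absurd (Finset.card_le_card hS) (by omega)⟩
  obtain ⟨k, hk⟩ := Nat.exists_eq_add_of_le hge
  rcases k with _ | _ | _ | k
  · refine ⟨0, fun S hS _ hSd => ?_⟩
    obtain rfl : S = σ := Finset.eq_of_subset_of_card_le hS (by omega)
    obtain ⟨v, hv⟩ : S.Nonempty := Finset.card_pos.1 (by omega)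
    have hsd : S \ S.erase v = {v} := by
      ext x; simp only [Finset.mem_sdiff, Finset.mem_erase, Finset.mem_singleton]; grind
    have h := hc (S.erase v) (Finset.erase_subset v S) (hsd ▸ isCycleFace_singleton v)
    rw [scalarD_of_sdiff_eq_singleton hsd, Finset.insert_erase hv] at h
    have hs := koszulSign_cast_mul_self (K := K) v (S.erase v)
    have : c S = 0 := by
      linear_combination (koszulSign v (S.erase v) : K) * h - c S * hs
    simp [scalarD, this]
  · obtain ⟨g, hg⟩ := exists_scalarD_eq_on_vertices hn c hc (by omega)
    exact ⟨g, fun S hS _ hSd => hg S hS (by omega)⟩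
  · obtain ⟨g, hg⟩ := exists_scalarD_eq_on_edges hn (σ := σ) c (by
      rintro rfl
      rw [Finset.card_univ, Fintype.card_fin] at hk h2
      exact h2 (by omega) rfl)
    exact ⟨g, fun S hS hf hSd => hg S hS hf (by omega)⟩
  · refine ⟨0, fun S hS hf hSd => ?_⟩
    have := hf.card_le_two hn
    rw [Finset.card_sdiff_of_subset hS] at this
    omega

theorem mem_cycleIdeal_iff (p : MvPolynomial (Fin n) K) :
    p ∈ cycleIdeal n K ↔ ∀ m, IsCycleFace n m.support → coeff m p = 0 := by
  have hset : {m : MvPolynomial (Fin n) K | ∃ i j : Fin n, i ≠ j ∧ ¬ cycAdj n i j ∧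
      m = X i * X j} = (fun s => monomial s (1 : K)) ''
        {s | ∃ i j : Fin n, i ≠ j ∧ ¬ cycAdj n i j ∧
          s = Finsupp.single i 1 + Finsupp.single j 1} := by
    ext m
    simp only [Set.mem_ofPred_eq, Set.mem_image]
    constructor
    · rintro ⟨i, j, h1, h2, rfl⟩
      exact ⟨_, ⟨i, j, h1, h2, rfl⟩, by simp [X, monomial_mul]⟩
    · rintro ⟨_, ⟨i, j, h1, h2, rfl⟩, rfl⟩
      exact ⟨i, j, h1, h2, by simp [X, monomial_mul]⟩
  rw [cycleIdeal, hset, mem_ideal_span_monomial_image]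
  have key : ∀ m : Fin n →₀ ℕ, (∃ s ∈ {s : Fin n →₀ ℕ | ∃ i j : Fin n, i ≠ j ∧ ¬ cycAdj n i j ∧
      s = Finsupp.single i 1 + Finsupp.single j 1}, s ≤ m) ↔ ¬ IsCycleFace n m.support := by
    intro m
    simp only [IsCycleFace, not_forall, Finsupp.mem_support_iff]
    constructor
    · rintro ⟨_, ⟨i, j, hij, hadj, rfl⟩, hle⟩
      have hi := hle i
      have hj := hle j
      simp only [Finsupp.add_apply, Finsupp.single_eq_same] at hi hj
      exact ⟨i, by omega, j, by omega, hij, hadj⟩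
    · rintro ⟨i, hi, j, hj, hij, hadj⟩
      refine ⟨_, ⟨i, j, hij, hadj, rfl⟩, fun k => ?_⟩
      simp only [Finsupp.add_apply, Finsupp.single_apply]
      split_ifs with h1 h2
      · exact absurd (h1.trans h2.symm) hij
      · subst h1; omega
      · rename_i h2; subst h2; omega
      · omega
  refine forall_congr' fun m => ?_
  rw [key, mem_support_iff]
  tauto

/-- A homogeneous Koszul cycle of the Stanley–Reisner ring of the cycle is a boundary outside the
degrees in which the Betti numbers are concentrated. -/
theorem exists_sub_koszulD_mem_cycleIdeal [NeZero n] (hn : 4 ≤ n) {d j : ℕ}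
    {f : Finset (Fin n) → MvPolynomial (Fin n) K}
    (hdeg : ∀ S m, coeff m (f S) ≠ 0 → S.card = d ∧ m.degree + S.card = j)
    (hf : ∀ S, koszulD (K := K) f S ∈ cycleIdeal n K)
    (h0 : ¬(d = 0 ∧ j = 0)) (h1 : ¬(1 ≤ d ∧ d ≤ n - 3 ∧ j = d + 1))
    (h2 : d = n - 2 → j = n →
      ∑ v, edgeValue Finset.univ (multiPart f (sqfreeExp Finset.univ)) v = 0) :
    ∃ g : Finset (Fin n) → MvPolynomial (Fin n) K,
      ∀ S, f S - koszulD (K := K) g S ∈ cycleIdeal n K := by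
  classical
  have hcyc : ∀ S m, IsCycleFace n m.support →
      scalarD (m + sqfreeExp S).support (multiPart f (m + sqfreeExp S)) S = 0 := by
    intro S m hm
    rw [← coeff_koszulD (coeff_eq_multiPart f)]
    exact (mem_cycleIdeal_iff _).1 (hf S) m hm
  have hex : ∀ a : Fin n →₀ ℕ, ∃ γ : Finset (Fin n) → K, (multiPart f a = 0 → γ = 0) ∧
      ∀ S m, m + sqfreeExp S = a → IsCycleFace n m.support →
        scalarD a.support γ S = multiPart f a S := by
    intro a
    by_cases ha : multiPart f a = 0
    · exact ⟨0, fun _ => rfl, fun S m _ _ => by simp [ha, scalarD]⟩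
    suffices h : ∃ γ : Finset (Fin n) → K,
        ∀ S m, m + sqfreeExp S = a → IsCycleFace n m.support →
          scalarD a.support γ S = multiPart f a S by
      obtain ⟨γ, hγ⟩ := h
      exact ⟨γ, fun h => absurd h ha, hγ⟩
    by_cases hsq : ∃ k, 2 ≤ a k
    · obtain ⟨k, hk⟩ := hsq
      refine ⟨scalarH k (multiPart f a), fun S m hma hm => ?_⟩
      refine scalarD_scalarH (by simp; omega) fun hkS => ?_
      have hkT : sqfreeExp S = Finsupp.single k 1 + sqfreeExp (S.erase k) := by
        rw [← sqfreeExp_insert (Finset.notMem_erase k S), Finset.insert_erase hkS]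
      have hmk : k ∈ m.support := by
        have := DFunLike.congr_fun hma k
        rw [Finsupp.add_apply, sqfreeExp_apply, if_pos hkS] at this
        rw [Finsupp.mem_support_iff]; omega
      have hsupp : (m + Finsupp.single k 1).support = m.support := by
        ext x
        simp only [Finsupp.mem_support_iff, Finsupp.add_apply, Finsupp.single_apply] at hmk ⊢
        split_ifs with hx
        · subst hx; simp [hmk]
        · simp
      have := hcyc (S.erase k) (m + Finsupp.single k 1) (hsupp ▸ hm)
      rwa [add_assoc, ← hkT, hma] at this
    · push Not at hsq
      have haσ : a = sqfreeExp a.support := by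
        ext k
        rw [sqfreeExp_apply]
        have := hsq k
        split_ifs with hk
        · rw [Finsupp.mem_support_iff] at hk; omega
        · rwa [Finsupp.notMem_support_iff] at hk
      have hmS : ∀ m S, m + sqfreeExp S = a ↔ S ⊆ a.support ∧ m = sqfreeExp (a.support \ S) := by
        intro m S
        have hval : ∀ k, a k = if k ∈ a.support then 1 else 0 := fun k => by
          conv_lhs => rw [haσ]
          exact sqfreeExp_apply _ _
        constructor
        · intro h
          have hk : ∀ k, m k + (if k ∈ S then 1 else 0) = if k ∈ a.support then 1 else 0 := by
            intro k
            rw [← hval, ← h, Finsupp.add_apply, sqfreeExp_apply]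
          refine ⟨fun k hkS => ?_, ?_⟩
          · have := hk k
            by_contra hka
            rw [if_pos hkS, if_neg hka] at this
            omega
          · ext k
            have := hk k
            simp only [sqfreeExp_apply, Finset.mem_sdiff]
            by_cases h1 : k ∈ S <;> by_cases h2 : k ∈ a.support <;> 
              simp [h1, h2] at this ⊢ <;> omega
        · rintro ⟨hS, rfl⟩
          ext k
          simp only [Finsupp.add_apply, sqfreeExp_apply, hval k, Finset.mem_sdiff]
          have := @hS k
          by_cases h1 : k ∈ S
          · simp [h1, this h1]
          · simp [h1]
      have hsup : ∀ T : Finset (Fin n), (sqfreeExp T).support = T := fun T => by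
        ext k; simp [sqfreeExp_apply]
      have hcard : a.support.card = j := by
        obtain ⟨S, hS⟩ := Function.ne_iff.1 ha
        obtain ⟨m, hm, hma⟩ := exists_of_multiPart_ne_zero hS
        rw [← (hdeg S m hm).2, ← degree_sqfreeExp, ← haσ, ← hma, map_add, degree_sqfreeExp]
      obtain ⟨γ, hγ⟩ := exists_scalarD_eq_of_face hn (σ := a.support) (d := d) (multiPart f a)
        (fun S hS => by
          obtain ⟨m, hm, _⟩ := exists_of_multiPart_ne_zero hS
          exact (hdeg S m hm).1)
        (fun S hS hface => by
          have h := (hmS _ S).2 ⟨hS, rfl⟩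
          have := hcyc S (sqfreeExp (a.support \ S)) (by rwa [hsup])
          rwa [h] at this)
        (by rwa [hcard]) (by rwa [hcard])
        (fun hd hn' => by
          have huniv : a.support = Finset.univ := by
            rw [← Finset.card_eq_iff_eq_univ, hn', Fintype.card_fin]
          have := h2 hd (hcard.symm.trans hn')
          rw [haσ, huniv, hsup]
          exact this)
      refine ⟨γ, fun S m hma hm => ?_⟩
      obtain ⟨hS, rfl⟩ := (hmS m S).1 hma
      rw [hsup] at hm
      exact hγ S hS hm
  choose γ hγ0 hγ using hex
  obtain ⟨g, hg⟩ := exists_chain_of_multiPart f γ hγ0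
  refine ⟨g, fun S => (mem_cycleIdeal_iff _).2 fun m hm => ?_⟩
  rw [coeff_sub, coeff_koszulD hg, hγ _ S m rfl hm, ← coeff_eq_multiPart, sub_self]

end Cycle

section Resolution

open MvPolynomial

variable {n : ℕ} {K : Type} [Field K]

/-- The Koszul complex of a free module is exact away from the constants, compatibly with any
grading of the generators. -/
theorem exists_koszulD_eq_of_free {b : ℕ} {w : Finset (Fin n) → Fin b →₀ MvPolynomial (Fin n) K}
    (hw : ∀ S, koszulD (K := K) w S = 0) (h0 : ∀ l, constantCoeff (w ∅ l) = 0) :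
    ∃ v : Finset (Fin n) → Fin b →₀ MvPolynomial (Fin n) K,
      (∀ S, koszulD (K := K) v S = w S) ∧ v ∅ = 0 ∧
      ∀ l S m, coeff m (v S l) ≠ 0 → ∃ S' m', coeff m' (w S' l) ≠ 0 ∧ S.card = S'.card + 1 ∧
        m.degree + S.card = m'.degree + S'.card := by
  have hco : ∀ (u : Finset (Fin n) → Fin b →₀ MvPolynomial (Fin n) K) l S,
      koszulD (K := K) (fun S => u S l) S = koszulD (K := K) u S l := fun u l S =>
    koszulD_map (Finsupp.lapply l) u S
  choose g hg hg0 hgd using fun l => exists_koszulD_eq (f := fun S => w S l)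
    (fun S => by rw [hco, hw, Finsupp.zero_apply]) (h0 l)
  refine ⟨fun S => Finsupp.equivFunOnFinite.symm fun l => g l S, fun S => ?_, ?_, ?_⟩
  · ext1 l
    rw [← hco]
    simpa using hg l S
  · ext1 l
    simpa using hg0 l
  · intro l S m hm
    exact hgd l S m (by simpa using hm)

namespace MinimalFreeResolution

variable {M : Type} [AddCommGroup M] [Module (MvPolynomial (Fin n) K) M]
  (F : MinimalFreeResolution n K M)

theorem phi_apply (d : ℕ) (x : Fin (F.b (d + 1)) →₀ MvPolynomial (Fin n) K) (l : Fin (F.b d)) :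
    F.φ d x l = ∑ i, x i * F.φ d (Finsupp.single i 1) l := by
  conv_lhs => rw [← Finsupp.univ_sum_single x]
  rw [map_sum, Finsupp.finsetSum_apply]
  refine Finset.sum_congr rfl fun i _ => ?_
  rw [← mul_one (x i), ← smul_eq_mul, ← Finsupp.smul_single, map_smul, Finsupp.smul_apply]
  simp

theorem constantCoeff_phi (d : ℕ) (x : Fin (F.b (d + 1)) →₀ MvPolynomial (Fin n) K)
    (l : Fin (F.b d)) : constantCoeff (F.φ d x l) = 0 := by
  rw [phi_apply, map_sum]
  exact Finset.sum_eq_zero fun i _ => by rw [map_mul, F.minimal, mul_zero]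

/-- The chain `u` is a Koszul cycle of the cokernel of the `d`-th differential. -/
def IsKoszulCycle (d : ℕ) (u : Finset (Fin n) → Fin (F.b d) →₀ MvPolynomial (Fin n) K) : Prop :=
  ∀ S, koszulD (K := K) u S ∈ LinearMap.range (F.φ d)

/-- The chain `u` is a Koszul boundary of the cokernel of the `d`-th differential. -/
def IsKoszulBoundary (d : ℕ)
    (u : Finset (Fin n) → Fin (F.b d) →₀ MvPolynomial (Fin n) K) : Prop :=
  ∃ v : Finset (Fin n) → Fin (F.b d) →₀ MvPolynomial (Fin n) K,
    ∀ S, u S - koszulD (K := K) v S ∈ LinearMap.range (F.φ d)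

/-- One step of the zigzag between the resolution and the Koszul complex. -/
def Linked (d : ℕ) (u : Finset (Fin n) → Fin (F.b (d + 1)) →₀ MvPolynomial (Fin n) K)
    (u' : Finset (Fin n) → Fin (F.b d) →₀ MvPolynomial (Fin n) K) : Prop :=
  u' ∅ = 0 ∧ ∀ S, koszulD (K := K) u' S = F.φ d (u S)

variable {F}

theorem Linked.isKoszulCycle {d : ℕ}
    {u : Finset (Fin n) → Fin (F.b (d + 1)) →₀ MvPolynomial (Fin n) K}
    {u' : Finset (Fin n) → Fin (F.b d) →₀ MvPolynomial (Fin n) K} (h : F.Linked d u u') :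
    F.IsKoszulCycle d u' :=
  fun S => ⟨u S, (h.2 S).symm⟩

theorem Linked.isKoszulBoundary_iff {d : ℕ}
    {u : Finset (Fin n) → Fin (F.b (d + 1)) →₀ MvPolynomial (Fin n) K}
    {u' : Finset (Fin n) → Fin (F.b d) →₀ MvPolynomial (Fin n) K} (h : F.Linked d u u') :
    F.IsKoszulBoundary (d + 1) u ↔ F.IsKoszulBoundary d u' := by
  constructor
  · rintro ⟨v, hv⟩
    have hcyc : ∀ S, koszulD (K := K) (fun S => u' S - F.φ d (v S)) S = 0 := by
      intro S
      have := hv S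
      rw [← F.exact_succ d, LinearMap.mem_ker, map_sub] at this
      rw [koszulD_sub, koszulD_map, h.2, this]
    obtain ⟨w, hw, -⟩ := exists_koszulD_eq_of_free hcyc (fun l => by
      rw [h.1, zero_sub, Finsupp.neg_apply, map_neg, constantCoeff_phi, neg_zero])
    refine ⟨w, fun S => ⟨v S, ?_⟩⟩
    rw [hw S]; abel
  · rintro ⟨v, hv⟩
    choose w hw using hv
    refine ⟨w, fun S => ?_⟩
    rw [← F.exact_succ d, LinearMap.mem_ker, map_sub, ← h.2, sub_eq_zero]
    have h1 := koszulD_map (F.φ d) w S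
    rw [← h1]
    simp only [hw]
    rw [koszulD_sub, koszulD_koszulD, sub_zero]

theorem Linked.add {d : ℕ}
    {u v : Finset (Fin n) → Fin (F.b (d + 1)) →₀ MvPolynomial (Fin n) K}
    {u' v' : Finset (Fin n) → Fin (F.b d) →₀ MvPolynomial (Fin n) K}
    (hu : F.Linked d u u') (hv : F.Linked d v v') :
    F.Linked d (fun S => u S + v S) (fun S => u' S + v' S) := by
  refine ⟨by simp [hu.1, hv.1], fun S => ?_⟩
  rw [koszulD_add, map_add, hu.2, hv.2]

theorem Linked.smul {d : ℕ} (r : MvPolynomial (Fin n) K)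
    {u : Finset (Fin n) → Fin (F.b (d + 1)) →₀ MvPolynomial (Fin n) K}
    {u' : Finset (Fin n) → Fin (F.b d) →₀ MvPolynomial (Fin n) K}
    (hu : F.Linked d u u') : F.Linked d (fun S => r • u S) (fun S => r • u' S) := by
  refine ⟨by simp [hu.1], fun S => ?_⟩
  rw [koszulD_smul, map_smul, hu.2]

theorem exists_linked_left {d p : ℕ}
    {u' : Finset (Fin n) → Fin (F.b d) →₀ MvPolynomial (Fin n) K} (h : F.IsKoszulCycle d u')
    (hp : ∀ S, u' S ≠ 0 → S.card = p + 1) :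
    ∃ u, F.Linked d u u' ∧ F.IsKoszulCycle (d + 1) u ∧ ∀ S, u S ≠ 0 → S.card = p := by
  classical
  choose w hw using h
  have hlink : F.Linked d (fun S => if koszulD (K := K) u' S = 0 then 0 else w S) u' := by
    refine ⟨?_, fun S => ?_⟩
    · by_contra h0
      simpa using hp ∅ h0
    · beta_reduce
      split_ifs with h0
      · rw [h0, map_zero]
      · rw [hw]
  refine ⟨_, hlink, fun S => ?_, fun S hS => ?_⟩
  · rw [← F.exact_succ d, LinearMap.mem_ker, ← koszulD_map (F.φ d) _ S]
    simp only [← hlink.2]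
    exact koszulD_koszulD _ S
  · have h0 : koszulD (K := K) u' S ≠ 0 := by
      intro h0
      simp [h0] at hS
    obtain ⟨i, hi, hne⟩ := Finset.exists_ne_zero_of_sum_ne_zero h0
    have hne' : u' (insert i S) ≠ 0 := by
      intro h0
      simp [h0] at hne
    have := hp _ hne'
    rw [Finset.card_insert_of_notMem (Finset.mem_compl.1 hi)] at this
    omega

variable (F) in
/-- The zigzag between the `d`-th and the zeroth term of the resolution. -/
def LinkChain : ∀ d : ℕ, (Finset (Fin n) → Fin (F.b d) →₀ MvPolynomial (Fin n) K) →
    (Finset (Fin n) → Fin (F.b 0) →₀ MvPolynomial (Fin n) K) → Prop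
  | 0, u, u₀ => u = u₀
  | d + 1, u, u₀ => ∃ u', F.Linked d u u' ∧ LinkChain d u' u₀

theorem LinkChain.isKoszulBoundary_iff {d : ℕ}
    {u : Finset (Fin n) → Fin (F.b d) →₀ MvPolynomial (Fin n) K}
    {u₀ : Finset (Fin n) → Fin (F.b 0) →₀ MvPolynomial (Fin n) K} (h : F.LinkChain d u u₀) :
    F.IsKoszulBoundary d u ↔ F.IsKoszulBoundary 0 u₀ := by
  induction d with
  | zero => rw [show u = u₀ from h]
  | succ d ih =>
    obtain ⟨u', hl, hc⟩ := h
    exact hl.isKoszulBoundary_iff.trans (ih hc)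

theorem LinkChain.add {d : ℕ}
    {u v : Finset (Fin n) → Fin (F.b d) →₀ MvPolynomial (Fin n) K}
    {u₀ v₀ : Finset (Fin n) → Fin (F.b 0) →₀ MvPolynomial (Fin n) K}
    (hu : F.LinkChain d u u₀) (hv : F.LinkChain d v v₀) :
    F.LinkChain d (fun S => u S + v S) (fun S => u₀ S + v₀ S) := by
  induction d with
  | zero => rw [show u = u₀ from hu, show v = v₀ from hv]; rfl
  | succ d ih =>
    obtain ⟨u', hl, hc⟩ := hu
    obtain ⟨v', hl', hc'⟩ := hv
    exact ⟨_, hl.add hl', ih hc hc'⟩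

theorem LinkChain.smul {d : ℕ} (r : MvPolynomial (Fin n) K)
    {u : Finset (Fin n) → Fin (F.b d) →₀ MvPolynomial (Fin n) K}
    {u₀ : Finset (Fin n) → Fin (F.b 0) →₀ MvPolynomial (Fin n) K}
    (hu : F.LinkChain d u u₀) : F.LinkChain d (fun S => r • u S) (fun S => r • u₀ S) := by
  induction d with
  | zero => rw [show u = u₀ from hu]; rfl
  | succ d ih =>
    obtain ⟨u', hl, hc⟩ := hu
    exact ⟨_, hl.smul r, ih hc⟩

theorem exists_linkChain_left (d : ℕ) {p : ℕ}
    {u₀ : Finset (Fin n) → Fin (F.b 0) →₀ MvPolynomial (Fin n) K} (h : F.IsKoszulCycle 0 u₀)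
    (hp : ∀ S, u₀ S ≠ 0 → S.card = p + d) :
    ∃ u, F.LinkChain d u u₀ ∧ F.IsKoszulCycle d u ∧ ∀ S, u S ≠ 0 → S.card = p := by
  induction d generalizing p with
  | zero => exact ⟨u₀, rfl, h, hp⟩
  | succ d ih =>
    obtain ⟨u', hc, hcyc, hp'⟩ := ih (p := p + 1) (fun S hS => by rw [hp S hS]; ring)
    obtain ⟨u, hl, hcyc', hp''⟩ := exists_linked_left hcyc hp'
    exact ⟨u, ⟨u', hl, hc⟩, hcyc', hp''⟩

end MinimalFreeResolution

/-- A chain of total degree `j` in exterior degree `p`, for generators of degrees `e`. -/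
def IsHomogeneousChain {b : ℕ} (e : Fin b → ℕ) (p j : ℕ)
    (u : Finset (Fin n) → Fin b →₀ MvPolynomial (Fin n) K) : Prop :=
  ∀ l S m, coeff m (u S l) ≠ 0 → S.card = p ∧ m.degree + S.card + e l = j

namespace GradedMinimalFreeResolution

variable (F : GradedMinimalFreeResolution n K)

theorem isHomogeneousChain_phi {d p j : ℕ}
    {u : Finset (Fin n) → Fin (F.toMFR.b (d + 1)) →₀ MvPolynomial (Fin n) K}
    (hu : IsHomogeneousChain (F.deg (d + 1)) p j u) :
    IsHomogeneousChain (F.deg d) p j fun S => F.toMFR.φ d (u S) := by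
  classical
  intro l S m hm
  rw [F.toMFR.phi_apply, coeff_sum] at hm
  obtain ⟨i, -, hi⟩ := Finset.exists_ne_zero_of_sum_ne_zero hm
  rw [coeff_mul] at hi
  obtain ⟨⟨m₁, m₂⟩, hmm, hne⟩ := Finset.exists_ne_zero_of_sum_ne_zero hi
  rw [Finset.HasAntidiagonal.mem_antidiagonal] at hmm
  simp only at hne hmm
  obtain ⟨hS, hj⟩ := hu i S m₁ (left_ne_zero_of_mul hne)
  refine ⟨hS, ?_⟩
  have h2 := right_ne_zero_of_mul hne
  rcases F.hom_phi d i l with h0 | ⟨k, hk, hhom⟩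
  · rw [h0, coeff_zero] at h2
    exact absurd rfl h2
  · have : m₂.degree = k := by
      have := (mem_homogeneousSubmodule k _).1 hhom h2
      rw [Finsupp.degree_eq_weight_one]; exact this
    rw [← hmm, map_add]
    omega

theorem exists_linkChain {d p j : ℕ}
    {u : Finset (Fin n) → Fin (F.toMFR.b d) →₀ MvPolynomial (Fin n) K}
    (hu : IsHomogeneousChain (F.deg d) p j u) (hcyc : F.toMFR.IsKoszulCycle d u) :
    ∃ u₀, F.toMFR.LinkChain d u u₀ ∧ F.toMFR.IsKoszulCycle 0 u₀ ∧
      IsHomogeneousChain (F.deg 0) (p + d) j u₀ := by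
  induction d generalizing p with
  | zero => exact ⟨u, rfl, hcyc, hu⟩
  | succ d ih =>
    have h0 : ∀ S, koszulD (K := K) (fun S => F.toMFR.φ d (u S)) S = 0 := by
      intro S
      have := hcyc S
      rw [← F.toMFR.exact_succ d, LinearMap.mem_ker] at this
      rw [koszulD_map, this]
    obtain ⟨u', hu', hu0, hdeg⟩ := exists_koszulD_eq_of_free h0
      fun l => F.toMFR.constantCoeff_phi d _ l
    have hl : F.toMFR.Linked d u u' := ⟨hu0, hu'⟩
    have hhom : IsHomogeneousChain (F.deg d) (p + 1) j u' := by
      intro l S m hm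
      obtain ⟨S', m', hm', hS, hd⟩ := hdeg l S m hm
      obtain ⟨h1, h2⟩ := F.isHomogeneousChain_phi hu l S' m' hm'
      omega
    obtain ⟨u₀, hc, hcyc', hhom₀⟩ := ih hhom hl.isKoszulCycle
    exact ⟨u₀, ⟨u', hl, hc⟩, hcyc', by rwa [add_right_comm, add_assoc] at hhom₀⟩

/-- A homogeneous cycle on the zeroth term is represented by a homogeneous chain of polynomials
which is a cycle modulo the ideal. -/
theorem exists_chain_of_zeroth {p j : ℕ}
    {u : Finset (Fin n) → Fin (F.toMFR.b 0) →₀ MvPolynomial (Fin n) K}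
    (hu : IsHomogeneousChain (F.deg 0) p j u) (hcyc : F.toMFR.IsKoszulCycle 0 u) :
    ∃ f : Finset (Fin n) → MvPolynomial (Fin n) K,
      (∀ S, Ideal.Quotient.mk (cycleIdeal n K) (f S) = F.toMFR.ε (u S)) ∧
      (∀ S, koszulD (K := K) f S ∈ cycleIdeal n K) ∧
      ∀ S m, coeff m (f S) ≠ 0 → S.card = p ∧ m.degree + S.card = j := by
  classical
  choose q hq hqe using F.hom_eps
  have hmk : ∀ S, Ideal.Quotient.mk (cycleIdeal n K) (∑ i, u S i * q i) =
      F.toMFR.ε (u S) := by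
    intro S
    conv_rhs => rw [← Finsupp.univ_sum_single (u S)]
    rw [map_sum, map_sum]
    refine Finset.sum_congr rfl fun i _ => ?_
    have hsm : Ideal.Quotient.mk (cycleIdeal n K) (u S i) *
        F.toMFR.ε (Finsupp.single i 1) = u S i • F.toMFR.ε (Finsupp.single i 1) :=
      (Algebra.smul_def _ _).symm
    rw [map_mul, hqe, hsm, ← map_smul]
    simp
  refine ⟨fun S => ∑ i, u S i * q i, hmk, fun S => ?_, fun S m hm => ?_⟩
  · have h1 := hcyc S
    rw [← F.toMFR.exact_zero, LinearMap.mem_ker, ← koszulD_map F.toMFR.ε u S] at h1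
    simp only [← hmk] at h1
    have h2 := koszulD_map (K := K)
      (Submodule.mkQ (cycleIdeal n K)) (fun S => ∑ i, u S i * q i) S
    rw [← Ideal.Quotient.eq_zero_iff_mem, ← h1]
    exact h2.symm
  · rw [coeff_sum] at hm
    obtain ⟨i, -, hi⟩ := Finset.exists_ne_zero_of_sum_ne_zero hm
    rw [coeff_mul] at hi
    obtain ⟨⟨m₁, m₂⟩, hmm, hne⟩ := Finset.exists_ne_zero_of_sum_ne_zero hi
    rw [Finset.HasAntidiagonal.mem_antidiagonal] at hmm
    simp only at hne hmm
    obtain ⟨hS, hj⟩ := hu i S m₁ (left_ne_zero_of_mul hne)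
    have : m₂.degree = F.deg 0 i := by
      have := (mem_homogeneousSubmodule _ _).1 (hq i) (right_ne_zero_of_mul hne)
      rw [Finsupp.degree_eq_weight_one]; exact this
    refine ⟨hS, ?_⟩
    rw [← hmm, map_add]
    omega

theorem isKoszulBoundary_zero_iff
    {u : Finset (Fin n) → Fin (F.toMFR.b 0) →₀ MvPolynomial (Fin n) K}
    {f : Finset (Fin n) → MvPolynomial (Fin n) K}
    (h : ∀ S, Ideal.Quotient.mk (cycleIdeal n K) (f S) = F.toMFR.ε (u S)) :
    F.toMFR.IsKoszulBoundary 0 u ↔ ∃ g : Finset (Fin n) → MvPolynomial (Fin n) K,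
      ∀ S, f S - koszulD (K := K) g S ∈ cycleIdeal n K := by
  have key : ∀ (v : Finset (Fin n) → Fin (F.toMFR.b 0) →₀ MvPolynomial (Fin n) K)
      (g : Finset (Fin n) → MvPolynomial (Fin n) K),
      (∀ S, Ideal.Quotient.mk (cycleIdeal n K) (g S) = F.toMFR.ε (v S)) →
      ∀ S, (u S - koszulD (K := K) v S ∈ LinearMap.range (F.toMFR.φ 0) ↔
        f S - koszulD (K := K) g S ∈ cycleIdeal n K) := by
    intro v g hvg S
    have h2 := koszulD_map (K := K) (Submodule.mkQ (cycleIdeal n K)) g S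
    have h3 := koszulD_map (K := K) F.toMFR.ε v S
    have h4 : (fun S => Submodule.mkQ (cycleIdeal n K) (g S)) = fun S => F.toMFR.ε (v S) :=
      funext hvg
    rw [h4] at h2
    rw [← F.toMFR.exact_zero, LinearMap.mem_ker, map_sub, ← h, ← h3, h2,
      ← Ideal.Quotient.eq_zero_iff_mem, map_sub]
    rfl
  constructor
  · rintro ⟨v, hv⟩
    choose g hg using fun S => Ideal.Quotient.mk_surjective (I := cycleIdeal n K) (F.toMFR.ε (v S))
    exact ⟨g, fun S => (key v g hg S).1 (hv S)⟩
  · rintro ⟨g, hg⟩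
    choose v hv using fun S => F.toMFR.surj (Ideal.Quotient.mk (cycleIdeal n K) (g S))
    exact ⟨v, fun S => (key v g (fun S => (hv S).symm) S).2 (hg S)⟩

end GradedMinimalFreeResolution

end Resolution

section Betti

open MvPolynomial

variable {n : ℕ} {K : Type} [Field K]

theorem constantCoeff_koszulD (f : Finset (Fin n) → MvPolynomial (Fin n) K)
    (S : Finset (Fin n)) : constantCoeff (koszulD (K := K) f S) = 0 := by
  simp [koszulD]

theorem MinimalFreeResolution.IsKoszulBoundary.constantCoeff_eq_zero {M : Type} [AddCommGroup M]
    [Module (MvPolynomial (Fin n) K) M] {F : MinimalFreeResolution n K M} {d : ℕ}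
    {u : Finset (Fin n) → Fin (F.b d) →₀ MvPolynomial (Fin n) K} (h : F.IsKoszulBoundary d u)
    (S : Finset (Fin n)) (l : Fin (F.b d)) : constantCoeff (u S l) = 0 := by
  obtain ⟨v, hv⟩ := h
  obtain ⟨w, hw⟩ := hv S
  have h1 := F.constantCoeff_phi d w l
  have h2 := constantCoeff_koszulD (fun S => v S l) S
  rw [show koszulD (K := K) (fun S => v S l) S = koszulD (K := K) v S l from
    koszulD_map (Finsupp.lapply l) v S] at h2
  rwa [hw, Finsupp.sub_apply, map_sub, h2, sub_zero] at h1

/-- The class of a Koszul chain of the cycle in the top multidegree: the sum of its values on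
the oriented edges. -/
noncomputable def cycleClass [NeZero n] (f : Finset (Fin n) → MvPolynomial (Fin n) K) : K :=
  ∑ v, edgeValue Finset.univ (multiPart f (sqfreeExp Finset.univ)) v

theorem cycleClass_combination [NeZero n] (α β : K)
    (f g : Finset (Fin n) → MvPolynomial (Fin n) K) :
    cycleClass (fun S => C α * f S + C β * g S) = α * cycleClass f + β * cycleClass g := by
  simp only [cycleClass, Finset.mul_sum, ← Finset.sum_add_distrib]
  refine Finset.sum_congr rfl fun v _ => ?_
  simp only [edgeValue, multiPart]
  split_ifs
  · rw [coeff_add, coeff_C_mul, coeff_C_mul]; ring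
  · ring

theorem sqfreeExp_add_sqfreeExp_compl (T : Finset (Fin n)) :
    sqfreeExp T + sqfreeExp (Finset.univ \ T) = sqfreeExp Finset.univ := by
  ext k
  by_cases h : k ∈ T <;> simp [sqfreeExp_apply, h]

theorem support_sqfreeExp (T : Finset (Fin n)) : (sqfreeExp T).support = T := by
  simpa using support_add_sqfreeExp 0 T

theorem cycleClass_eq_zero [NeZero n] (hn : 2 ≤ n)
    {f g : Finset (Fin n) → MvPolynomial (Fin n) K}
    (h : ∀ S, f S - koszulD (K := K) g S ∈ cycleIdeal n K) : cycleClass f = 0 := by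
  have key : ∀ v, edgeValue Finset.univ (multiPart f (sqfreeExp Finset.univ)) v =
      vertexValue Finset.univ (multiPart g (sqfreeExp Finset.univ)) (v + 1) -
        vertexValue Finset.univ (multiPart g (sqfreeExp Finset.univ)) v := by
    intro v
    rw [← edgeValue_scalarD hn (Finset.mem_univ v) (Finset.mem_univ _), edgeValue, edgeValue]
    congr 1
    have h1 := (mem_cycleIdeal_iff _).1 (h (Finset.univ \ {v, v + 1})) (sqfreeExp {v, v + 1})
      (by rw [support_sqfreeExp]; exact isCycleFace_edge v)
    rwa [coeff_sub, coeff_eq_multiPart, coeff_koszulD (coeff_eq_multiPart g),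
      sqfreeExp_add_sqfreeExp_compl, support_sqfreeExp, sub_eq_zero] at h1
  rw [cycleClass, Finset.sum_congr rfl fun v _ => key v, Finset.sum_sub_distrib, sub_eq_zero]
  exact Equiv.sum_comp (Equiv.addRight 1)
    (vertexValue Finset.univ (multiPart g (sqfreeExp Finset.univ)))

/-- The Koszul chain supported on a single edge of the cycle. -/
noncomputable def edgeChain (K : Type) [Field K] [NeZero n] (S : Finset (Fin n)) :
    MvPolynomial (Fin n) K :=
  if S = Finset.univ \ {0, 0 + 1} then monomial (sqfreeExp {0, 0 + 1}) 1 else 0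

theorem koszulD_edgeChain_mem [NeZero n] (hn : 4 ≤ n) (S : Finset (Fin n)) :
    koszulD (K := K) (edgeChain K) S ∈ cycleIdeal n K := by
  refine Ideal.sum_mem _ fun i hi => ?_
  refine Submodule.smul_of_tower_mem _ _ ?_
  rw [edgeChain]
  split_ifs with h
  · rw [smul_eq_mul, mem_cycleIdeal_iff]
    intro m hm
    rw [X, monomial_mul, coeff_monomial, if_neg]
    rintro rfl
    have hi' : i ∉ ({0, 0 + 1} : Finset (Fin n)) := by
      intro hi'
      have := h ▸ Finset.mem_insert_self i S
      exact (Finset.mem_sdiff.1 this).2 hi'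
    rw [← sqfreeExp_insert hi', support_sqfreeExp] at hm
    have := hm.card_le_two hn
    rw [Finset.card_insert_of_notMem hi',
      Finset.card_pair (Fin.add_one_ne_self_of_two_le (by omega) 0).symm] at this
    omega
  · rw [smul_zero]; exact zero_mem _

theorem card_sdiff_edge [NeZero n] (hn : 2 ≤ n) :
    (Finset.univ \ {0, 0 + 1} : Finset (Fin n)).card = n - 2 := by
  rw [Finset.card_sdiff_of_subset (Finset.subset_univ _), Finset.card_univ, Fintype.card_fin,
    Finset.card_pair (Fin.add_one_ne_self_of_two_le hn 0).symm]

theorem edge_injective [NeZero n] (hn : 4 ≤ n) {v w : Fin n}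
    (h : (Finset.univ \ {v, v + 1} : Finset (Fin n)) = Finset.univ \ {w, w + 1}) : v = w := by
  have h1 : v = w ∨ v = w + 1 := by
    by_contra h0
    have : v ∈ (Finset.univ \ {v, v + 1} : Finset (Fin n)) := by
      rw [h]; simpa using h0
    simp at this
  have h2 : v + 1 = w ∨ v + 1 = w + 1 := by
    by_contra h0
    have : v + 1 ∈ (Finset.univ \ {v, v + 1} : Finset (Fin n)) := by
      rw [h]; simpa using h0
    simp at this
  rcases h2 with h2 | h2
  · rcases h1 with h1 | h1
    · exact h1
    · exfalso
      rw [← h2, add_assoc, left_eq_add] at h1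
      have := congrArg Fin.val h1
      rw [Fin.val_add, Fin.val_one', Nat.mod_eq_of_lt (show 1 < n by omega),
        Nat.mod_eq_of_lt (by omega)] at this
      simp at this
  · exact add_right_cancel h2

theorem cycleClass_edgeChain_ne_zero [NeZero n] (hn : 4 ≤ n) :
    cycleClass (edgeChain K : Finset (Fin n) → MvPolynomial (Fin n) K) ≠ 0 := by
  have h0 : multiPart (edgeChain K) (sqfreeExp Finset.univ)
      (Finset.univ \ {(0 : Fin n), 0 + 1}) = 1 := by
    rw [← sqfreeExp_add_sqfreeExp_compl {(0 : Fin n), 0 + 1}, ← coeff_eq_multiPart, edgeChain,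
      if_pos rfl, coeff_monomial, if_pos rfl]
  rw [cycleClass, Finset.sum_eq_single 0]
  · rw [edgeValue, h0, mul_one]
    exact mul_ne_zero (left_ne_zero_of_mul_eq_one (koszulSign_cast_mul_self _ _))
      (left_ne_zero_of_mul_eq_one (koszulSign_cast_mul_self _ _))
  · intro v _ hv
    rw [edgeValue, ← sqfreeExp_add_sqfreeExp_compl {v, v + 1}, ← coeff_eq_multiPart, edgeChain,
      if_neg fun h => hv (edge_injective hn h), coeff_zero, mul_zero]
  · simp

namespace GradedMinimalFreeResolution

variable (F : GradedMinimalFreeResolution n K)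

/-- The Koszul chain given by a generator of the resolution. -/
noncomputable def generatorChain {d : ℕ} (i : Fin (F.toMFR.b d)) (S : Finset (Fin n)) :
    Fin (F.toMFR.b d) →₀ MvPolynomial (Fin n) K :=
  if S = ∅ then Finsupp.single i 1 else 0

/-- Every generator of the resolution transfers to a homogeneous Koszul cycle of the quotient
ring. -/
theorem exists_chain_of_generator {d : ℕ} (i : Fin (F.toMFR.b d)) :
    ∃ (u₀ : Finset (Fin n) → Fin (F.toMFR.b 0) →₀ MvPolynomial (Fin n) K)
      (f : Finset (Fin n) → MvPolynomial (Fin n) K),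
      F.toMFR.LinkChain d (F.generatorChain i) u₀ ∧
      (∀ S, Ideal.Quotient.mk (cycleIdeal n K) (f S) = F.toMFR.ε (u₀ S)) ∧
      (∀ S, koszulD (K := K) f S ∈ cycleIdeal n K) ∧
      ∀ S m, coeff m (f S) ≠ 0 → S.card = d ∧ m.degree + S.card = F.deg d i := by
  have hhom : IsHomogeneousChain (F.deg d) 0 (F.deg d i) (F.generatorChain i) := by
    classical
    intro l S m hm
    rw [generatorChain] at hm
    split_ifs at hm with hS
    · rw [Finsupp.single_apply] at hm
      split_ifs at hm with hl
      · rw [coeff_one] at hm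
        split_ifs at hm with h0
        · subst hS hl h0
          simp
        · exact absurd rfl hm
      · exact absurd (coeff_zero m) hm
    · exact absurd (coeff_zero m) hm
  have hcyc : F.toMFR.IsKoszulCycle d (F.generatorChain i) := by
    intro S
    have : koszulD (K := K) (F.generatorChain i) S = 0 :=
      Finset.sum_eq_zero fun i _ => by simp [generatorChain]
    rw [this]
    exact zero_mem _
  obtain ⟨u₀, hl, hc, hh⟩ := F.exists_linkChain hhom hcyc
  rw [zero_add] at hh
  obtain ⟨f, hf, hfc, hfd⟩ := F.exists_chain_of_zeroth hh hc
  exact ⟨u₀, f, hl, hf, hfc, hfd⟩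

theorem deg_mem [NeZero n] (hn : 4 ≤ n) {d : ℕ} (i : Fin (F.toMFR.b d)) :
    (d = 0 ∧ F.deg d i = 0) ∨ (d = n - 2 ∧ F.deg d i = n) ∨
      (1 ≤ d ∧ d ≤ n - 3 ∧ F.deg d i = d + 1) := by
  by_contra h
  push Not at h
  obtain ⟨u₀, f, hl, hf, hfc, hfd⟩ := F.exists_chain_of_generator i
  have hb := exists_sub_koszulD_mem_cycleIdeal hn hfd hfc (fun h' => h.1 h'.1 h'.2)
    (fun h' => h.2.2 h'.1 h'.2.1 h'.2.2) (fun h1 h2 => absurd h2 (h.2.1 h1))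
  rw [← F.isKoszulBoundary_zero_iff hf, ← hl.isKoszulBoundary_iff] at hb
  simpa [generatorChain] using hb.constantCoeff_eq_zero ∅ i

theorem subsingleton_top [NeZero n] (hn : 4 ≤ n) : Subsingleton (Fin (F.toMFR.b (n - 2))) := by
  refine ⟨fun i i' => ?_⟩
  by_contra hne
  have hdeg : ∀ i : Fin (F.toMFR.b (n - 2)), F.deg (n - 2) i = n := fun i => by
    have := F.deg_mem hn i
    omega
  have key : ∀ (u₀ : Finset (Fin n) → Fin (F.toMFR.b 0) →₀ MvPolynomial (Fin n) K)
      (u : Finset (Fin n) → Fin (F.toMFR.b (n - 2)) →₀ MvPolynomial (Fin n) K)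
      (f : Finset (Fin n) → MvPolynomial (Fin n) K), F.toMFR.LinkChain (n - 2) u u₀ →
      (∀ S, Ideal.Quotient.mk (cycleIdeal n K) (f S) = F.toMFR.ε (u₀ S)) →
      (∀ S, koszulD (K := K) f S ∈ cycleIdeal n K) →
      (∀ S m, coeff m (f S) ≠ 0 → S.card = n - 2 ∧ m.degree + S.card = n) →
      cycleClass f = 0 → F.toMFR.IsKoszulBoundary (n - 2) u := by
    intro u₀ u f hl hf hfc hfd h0
    rw [hl.isKoszulBoundary_iff, F.isKoszulBoundary_zero_iff hf]
    exact exists_sub_koszulD_mem_cycleIdeal hn hfd hfc (by omega) (by omega) fun _ _ => h0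
  obtain ⟨u₀, f, hl, hf, hfc, hfd⟩ := F.exists_chain_of_generator i
  obtain ⟨u₀', f', hl', hf', hfc', hfd'⟩ := F.exists_chain_of_generator i'
  rw [hdeg] at hfd hfd'
  have hω : cycleClass f ≠ 0 := by
    intro h0
    simpa [generatorChain] using (key _ _ _ hl hf hfc hfd h0).constantCoeff_eq_zero ∅ i
  have hb := key _ _ (fun S => C (cycleClass f') * f S + C (-cycleClass f) * f' S)
    ((hl.smul (C (cycleClass f'))).add (hl'.smul (C (-cycleClass f))))
    (fun S => by
      rw [map_add, map_mul, map_mul, hf, hf', map_add, map_smul, map_smul]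
      exact congrArg₂ _ (Algebra.smul_def _ _).symm (Algebra.smul_def _ _).symm)
    (fun S => by
      have := koszulD_add (K := K)
        (fun S => (C (cycleClass f') : MvPolynomial (Fin n) K) • f S)
        (fun S => (C (-cycleClass f) : MvPolynomial (Fin n) K) • f' S) S
      rw [koszulD_smul, koszulD_smul] at this
      simp only [smul_eq_mul] at this
      rw [this]
      exact Ideal.add_mem _ (Ideal.mul_mem_left _ _ (hfc S)) (Ideal.mul_mem_left _ _ (hfc' S)))
    (fun S m hm => by
      rw [coeff_add, coeff_C_mul, coeff_C_mul] at hm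
      by_cases h : coeff m (f S) = 0
      · refine hfd' S m fun h' => hm ?_
        rw [h, h', mul_zero, mul_zero, add_zero]
      · exact hfd S m h)
    (by rw [cycleClass_combination]; ring)
  have := hb.constantCoeff_eq_zero ∅ i'
  exact hω (by simpa [generatorChain, hne] using this)

theorem nonempty_top [NeZero n] (hn : 4 ≤ n) : Nonempty (Fin (F.toMFR.b (n - 2))) := by
  by_contra hemp
  rw [not_nonempty_iff] at hemp
  obtain ⟨x, hx⟩ := F.toMFR.surj
    (Ideal.Quotient.mk (cycleIdeal n K) (monomial (sqfreeExp {0, 0 + 1}) 1))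
  set u₀ : Finset (Fin n) → Fin (F.toMFR.b 0) →₀ MvPolynomial (Fin n) K :=
    fun S => if S = Finset.univ \ {0, 0 + 1} then x else 0 with hu₀
  have hf : ∀ S, Ideal.Quotient.mk (cycleIdeal n K) (edgeChain K S) = F.toMFR.ε (u₀ S) := by
    intro S
    rw [edgeChain, hu₀]
    beta_reduce
    split_ifs
    · exact hx.symm
    · rw [map_zero, map_zero]
  have hcyc : F.toMFR.IsKoszulCycle 0 u₀ := by
    intro S
    have h1 := koszulD_map (K := K) (Submodule.mkQ (cycleIdeal n K)) (edgeChain K) S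
    have h2 : (fun S => Submodule.mkQ (cycleIdeal n K) (edgeChain K S)) =
      fun S => F.toMFR.ε (u₀ S) := funext hf
    rw [← F.toMFR.exact_zero, LinearMap.mem_ker, ← koszulD_map F.toMFR.ε u₀ S, ← h2, h1]
    exact Ideal.Quotient.eq_zero_iff_mem.2 (koszulD_edgeChain_mem hn S)
  obtain ⟨u, hl, -, -⟩ := F.toMFR.exists_linkChain_left (n - 2) (p := 0) hcyc fun S hS => by
    rw [zero_add, ← card_sdiff_edge (n := n) (by omega)]
    by_contra h
    exact hS (if_neg fun h' => h (by rw [h']))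
  have hb : F.toMFR.IsKoszulBoundary (n - 2) u :=
    ⟨u, fun S => by rw [Subsingleton.elim (u S - _) 0]; exact zero_mem _⟩
  rw [hl.isKoszulBoundary_iff, F.isKoszulBoundary_zero_iff hf] at hb
  obtain ⟨g, hg⟩ := hb
  exact cycleClass_edgeChain_ne_zero hn (cycleClass_eq_zero (by omega) hg)

end GradedMinimalFreeResolution

end Betti

/-- For `n ≥ 4`, the graded Betti numbers `β_(d,j)` of `R/Jₙ` vanish unless
`(d,j) = (0,0)`, `(d,j) = (n-2, n)`, or `1 ≤ d ≤ n-3` and `j = d+1`;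
moreover `β_(n-2,n) = 1`. -/
theorem graded_betti_cycle (K : Type) [Field K] (n : ℕ) (hn : 4 ≤ n)
    (F : GradedMinimalFreeResolution n K) :
    (∀ d j : ℕ,
      ¬ ((d = 0 ∧ j = 0) ∨ (d = n - 2 ∧ j = n) ∨ (1 ≤ d ∧ d ≤ n - 3 ∧ j = d + 1)) →
        Nat.card {i : Fin (F.toMFR.b d) // F.deg d i = j} = 0) ∧
    Nat.card {i : Fin (F.toMFR.b (n - 2)) // F.deg (n - 2) i = n} = 1 := by
  have : NeZero n := ⟨by omega⟩
  refine ⟨fun d j h => ?_, ?_⟩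
  · have : IsEmpty {i : Fin (F.toMFR.b d) // F.deg d i = j} := by
      refine ⟨fun ⟨i, hi⟩ => h ?_⟩
      rw [← hi]
      exact F.deg_mem hn i
    exact Nat.card_of_isEmpty
  · have := F.subsingleton_top hn
    obtain ⟨i⟩ := F.nonempty_top hn
    refine Nat.card_eq_one_iff_unique.2 ⟨inferInstance, ⟨i, ?_⟩⟩
    have := F.deg_mem hn i
    omega
end
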